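/- arXiv:1908.09789 — 8 statements merged into one kernel-verified Lean document; each statement's English description precedes it below -/
import Mathlib

section
/- Let B be an open subset of the half-plane ℍ = {(H,r) ∈ ℝ² : r > 0}, let ξ₁, ξ₂ : B → ℝ be C¹ functions, and let x₁, x₂ : B → ℝ be C² functions satisfying ∂x₁/∂H = r·∂ξ₂/∂r, ∂x₁/∂r = −r·∂ξ₂/∂H, ∂x₂/∂H = −r·∂ξ₁/∂r, ∂x₂/∂r = r·∂ξ₁/∂H on B. Then the 1-form ξ₁ dx₁ + ξ₂ dx₂ is closed on B; explicitly, at every point of B one has ∂/∂r ( ξ₁·∂x₁/∂H + ξ₂·∂x₂/∂H ) = ∂/∂H ( ξ₁·∂x₁/∂r + ξ₂·∂x₂/∂r ). -/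
/-- Partial derivative in the first (`H`) direction of a function on `ℝ × ℝ`. -/
noncomputable def pdH (f : ℝ × ℝ → ℝ) (p : ℝ × ℝ) : ℝ := fderiv ℝ f p (1, 0)

/-- Partial derivative in the second (`r`) direction of a function on `ℝ × ℝ`. -/
noncomputable def pdr (f : ℝ × ℝ → ℝ) (p : ℝ × ℝ) : ℝ := fderiv ℝ f p (0, 1)

/-!
Since `d(ξ dx) = dξ ∧ dx`, closedness of `ξ₁ dx₁ + ξ₂ dx₂` means `dξ₁ ∧ dx₁ + dξ₂ ∧ dx₂ = 0`.
With `⋆dH = dr` and `⋆dr = -dH`, the equations for `x₁` and `x₂` read `dx₁ = -r ⋆dξ₂` and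
`dx₂ = r ⋆dξ₁`, so the two terms are `-r ⟨dξ₁, dξ₂⟩` and `r ⟨dξ₂, dξ₁⟩` times the area form, and
they cancel because the inner product is symmetric.
-/

section OneForms

variable {𝕜 E F G : Type*} [NontriviallyNormedField 𝕜]
  [NormedAddCommGroup E] [NormedSpace 𝕜 E] [NormedAddCommGroup F] [NormedSpace 𝕜 F]
  [NormedAddCommGroup G] [NormedSpace 𝕜 G] {p : E}

theorem fderiv_clm_apply_const_apply {ω : E → F →L[𝕜] G} (hω : DifferentiableAt 𝕜 ω p)
    (v : F) (w : E) : fderiv 𝕜 (fun q => ω q v) p w = fderiv 𝕜 ω p w v := by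
  simp [fderiv_clm_apply hω (differentiableAt_const v)]

theorem fderiv_smul_fderiv_sub_swap {ξ : E → 𝕜} {x : E → F} (hξ : DifferentiableAt 𝕜 ξ p)
    (hx : DifferentiableAt 𝕜 (fderiv 𝕜 x) p) (hsymm : IsSymmSndFDerivAt 𝕜 x p) (v w : E) :
    fderiv 𝕜 (fun q => ξ q • fderiv 𝕜 x q) p v w - fderiv 𝕜 (fun q => ξ q • fderiv 𝕜 x q) p w v
      = fderiv 𝕜 ξ p v • fderiv 𝕜 x p w - fderiv 𝕜 ξ p w • fderiv 𝕜 x p v := by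
  simp [fderiv_fun_smul hξ hx, hsymm.eq v w]

end OneForms

section Plane

variable {p : ℝ × ℝ}

theorem pdr_apply_sub_pdH_apply {ω : ℝ × ℝ → ℝ × ℝ →L[ℝ] ℝ} (hω : DifferentiableAt ℝ ω p) :
    pdr (fun q => ω q (1, 0)) p - pdH (fun q => ω q (0, 1)) p
      = fderiv ℝ ω p (0, 1) (1, 0) - fderiv ℝ ω p (1, 0) (0, 1) := by
  rw [pdr, pdH, fderiv_clm_apply_const_apply hω, fderiv_clm_apply_const_apply hω]

theorem pdr_sub_pdH_mul_add_mul {ξ₁ ξ₂ x₁ x₂ : ℝ × ℝ → ℝ}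
    (hξ₁ : DifferentiableAt ℝ ξ₁ p) (hξ₂ : DifferentiableAt ℝ ξ₂ p)
    (hx₁ : ContDiffAt ℝ 2 x₁ p) (hx₂ : ContDiffAt ℝ 2 x₂ p) :
    pdr (fun q => ξ₁ q * pdH x₁ q + ξ₂ q * pdH x₂ q) p
        - pdH (fun q => ξ₁ q * pdr x₁ q + ξ₂ q * pdr x₂ q) p
      = (pdr ξ₁ p * pdH x₁ p - pdH ξ₁ p * pdr x₁ p)
        + (pdr ξ₂ p * pdH x₂ p - pdH ξ₂ p * pdr x₂ p) := by
  have hdx₁ : DifferentiableAt ℝ (fderiv ℝ x₁) p :=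
    (hx₁.fderiv_right (m := 1) le_rfl).differentiableAt one_ne_zero
  have hdx₂ : DifferentiableAt ℝ (fderiv ℝ x₂) p :=
    (hx₂.fderiv_right (m := 1) le_rfl).differentiableAt one_ne_zero
  have hω₁ := hξ₁.fun_smul hdx₁
  have hω₂ := hξ₂.fun_smul hdx₂
  have hcurl₁ := fderiv_smul_fderiv_sub_swap hξ₁ hdx₁
    (hx₁.isSymmSndFDerivAt (by simp)) (0, 1) (1, 0)
  have hcurl₂ := fderiv_smul_fderiv_sub_swap hξ₂ hdx₂
    (hx₂.isSymmSndFDerivAt (by simp)) (0, 1) (1, 0)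
  calc
    _ = fderiv ℝ (fun q => ξ₁ q • fderiv ℝ x₁ q + ξ₂ q • fderiv ℝ x₂ q) p (0, 1) (1, 0)
        - fderiv ℝ (fun q => ξ₁ q • fderiv ℝ x₁ q + ξ₂ q • fderiv ℝ x₂ q) p (1, 0) (0, 1) :=
      pdr_apply_sub_pdH_apply (hω₁.fun_add hω₂)
    _ = _ := by
      rw [fderiv_fun_add hω₁ hω₂]
      simp only [add_apply, add_sub_add_comm, hcurl₁, hcurl₂, smul_eq_mul, pdr, pdH]

theorem closedness_of_xi_dx_general {ξ₁ ξ₂ x₁ x₂ : ℝ × ℝ → ℝ} {ρ : ℝ}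
    (hξ₁ : DifferentiableAt ℝ ξ₁ p) (hξ₂ : DifferentiableAt ℝ ξ₂ p)
    (hx₁ : ContDiffAt ℝ 2 x₁ p) (hx₂ : ContDiffAt ℝ 2 x₂ p)
    (hx₁H : pdH x₁ p = ρ * pdr ξ₂ p) (hx₁r : pdr x₁ p = -(ρ * pdH ξ₂ p))
    (hx₂H : pdH x₂ p = -(ρ * pdr ξ₁ p)) (hx₂r : pdr x₂ p = ρ * pdH ξ₁ p) :
    pdr (fun q => ξ₁ q * pdH x₁ q + ξ₂ q * pdH x₂ q) p
      = pdH (fun q => ξ₁ q * pdr x₁ q + ξ₂ q * pdr x₂ q) p := by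
  rw [← sub_eq_zero, pdr_sub_pdH_mul_add_mul hξ₁ hξ₂ hx₁ hx₂]
  have hwedge₁ : pdr ξ₁ p * pdH x₁ p - pdH ξ₁ p * pdr x₁ p
      = ρ * (pdH ξ₁ p * pdH ξ₂ p + pdr ξ₁ p * pdr ξ₂ p) := by
    rw [hx₁H, hx₁r]; ring
  have hwedge₂ : pdr ξ₂ p * pdH x₂ p - pdH ξ₂ p * pdr x₂ p
      = -(ρ * (pdH ξ₁ p * pdH ξ₂ p + pdr ξ₁ p * pdr ξ₂ p)) := by
    rw [hx₂H, hx₂r]; ring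
  rw [hwedge₁, hwedge₂, add_neg_cancel]

end Plane

/-- If `ξ₁, ξ₂` are `C¹` and `x₁, x₂` are `C²` on an open subset `B` of the half-plane
`{r > 0}`, with `∂x₁/∂H = r·∂ξ₂/∂r`, `∂x₁/∂r = −r·∂ξ₂/∂H`, `∂x₂/∂H = −r·∂ξ₁/∂r`,
`∂x₂/∂r = r·∂ξ₁/∂H` on `B`, then the 1-form `ξ₁ dx₁ + ξ₂ dx₂` is closed on `B`:
`∂/∂r (ξ₁·∂x₁/∂H + ξ₂·∂x₂/∂H) = ∂/∂H (ξ₁·∂x₁/∂r + ξ₂·∂x₂/∂r)` at every point of `B`. -/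
theorem closedness_of_xi_dx
    (B : Set (ℝ × ℝ)) (hBopen : IsOpen B) (hBhalf : ∀ p ∈ B, 0 < p.2)
    (ξ₁ ξ₂ x₁ x₂ : ℝ × ℝ → ℝ)
    (hξ₁ : ContDiffOn ℝ 1 ξ₁ B) (hξ₂ : ContDiffOn ℝ 1 ξ₂ B)
    (hx₁ : ContDiffOn ℝ 2 x₁ B) (hx₂ : ContDiffOn ℝ 2 x₂ B)
    (h1 : ∀ p ∈ B, pdH x₁ p = p.2 * pdr ξ₂ p)
    (h2 : ∀ p ∈ B, pdr x₁ p = -(p.2 * pdH ξ₂ p))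
    (h3 : ∀ p ∈ B, pdH x₂ p = -(p.2 * pdr ξ₁ p))
    (h4 : ∀ p ∈ B, pdr x₂ p = p.2 * pdH ξ₁ p) :
    ∀ p ∈ B,
      pdr (fun q => ξ₁ q * pdH x₁ q + ξ₂ q * pdH x₂ q) p
        = pdH (fun q => ξ₁ q * pdr x₁ q + ξ₂ q * pdr x₂ q) p := by
  intro p hp
  have hB : B ∈ nhds p := hBopen.mem_nhds hp
  exact closedness_of_xi_dx_general ((hξ₁.contDiffAt hB).differentiableAt one_ne_zero)
    ((hξ₂.contDiffAt hB).differentiableAt one_ne_zero) (hx₁.contDiffAt hB) (hx₂.contDiffAt hB)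
    (h1 p hp) (h2 p hp) (h3 p hp) (h4 p hp)
end

section
/- Let B be an open subset of the half-plane ℍ = {(H,r) ∈ ℝ² : r > 0}, let ξ₁, ξ₂ : B → ℝ be smooth functions each satisfying the axi-symmetric harmonic equation ∂²ξ/∂H² + ∂²ξ/∂r² + (1/r)·∂ξ/∂r = 0 on B, and suppose det Dξ := ∂ξ₁/∂H·∂ξ₂/∂r − ∂ξ₁/∂r·∂ξ₂/∂H > 0 on B. Let x = (x₁,x₂) : B → ℝ² be a smooth map satisfying ∂x₁/∂H = r·∂ξ₂/∂r, ∂x₁/∂r = −r·∂ξ₂/∂H, ∂x₂/∂H = −r·∂ξ₁/∂r, ∂x₂/∂r = r·∂ξ₁/∂H, and suppose x is injective with open image U. Let u : U → ℝ be a smooth function with ∂u/∂x₁ ∘ x = ξ₁ and ∂u/∂x₂ ∘ x = ξ₂ on B. Then: (1) the Hessian of u is positive definite at every point of U; and (2) u satisfies Abreu's equation ∑_{j,k=1}^{2} ∂²u^{jk}/∂x_j∂x_k = 0 on U, where (u^{jk}) denotes the inverse matrix of the Hessian of u. -/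
open Matrix

/-- The two standard basis vectors of `ℝ × ℝ`. -/
noncomputable def e2 : Fin 2 → ℝ × ℝ := ![(1, 0), (0, 1)]

/-- The Hessian matrix of a function `u : ℝ × ℝ → ℝ` at a point. -/
noncomputable def Hess (u : ℝ × ℝ → ℝ) (y : ℝ × ℝ) : Matrix (Fin 2) (Fin 2) ℝ :=
  Matrix.of fun i j => fderiv ℝ (fun z => fderiv ℝ u z (e2 i)) y (e2 j)

/-! Write `M = Dξ`. Donaldson's equations say that `Dx = r · adj(M)ᵀ`, and differentiating
`∇u ∘ x = ξ` gives `M = Hess u · Dx`. Hence `Hess u = M Mᵀ / (r det M)`, which is positive definite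
with determinant `r⁻²`, so the inverse Hessian is `r² adj(Hess u)`.

Read `(h, r) = x⁻¹` as functions on the `x`-plane. Their gradients are the columns of
`M / (r det M)`, so `r adj(Hess u) ∇r = *∇h` with `*∇h = (-∂₂h, ∂₁h)`. The adjugate of a Hessian
is divergence-free, so the divergence of the inverse Hessian is `2 r adj(Hess u) ∇r = 2 *∇h`, which
is itself divergence-free: this is Abreu's equation. -/

open Filter Topology Module

section MatrixAlgebra

variable {n : Type*} [Fintype n] [DecidableEq n]

lemma inv_smul_transpose_mul_smul_adjugate_transpose {K : Type*} [Field K] {M : Matrix n n K}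
    {c : K} (hc : c ≠ 0) (hM : M.det ≠ 0) :
    ((c * M.det)⁻¹ • Mᵀ) * (c • M.adjugateᵀ) = 1 := by
  rw [smul_mul_smul_comm, ← transpose_mul, adjugate_mul, transpose_smul, transpose_one, smul_smul,
    mul_assoc, inv_mul_cancel₀ (mul_ne_zero hc hM), one_smul]

lemma eq_inv_smul_mul_transpose_of_eq_mul_smul_adjugate_transpose {K : Type*} [Field K]
    {A M : Matrix n n K} {c : K} (hc : c ≠ 0) (hM : M.det ≠ 0) (h : M = A * (c • M.adjugateᵀ)) :
    A = (c * M.det)⁻¹ • (M * Mᵀ) :=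
  calc A = A * ((c • M.adjugateᵀ) * ((c * M.det)⁻¹ • Mᵀ)) := by
        rw [mul_eq_one_comm.1 (inv_smul_transpose_mul_smul_adjugate_transpose hc hM), mul_one]
    _ = M * ((c * M.det)⁻¹ • Mᵀ) := by rw [← mul_assoc, ← h]
    _ = (c * M.det)⁻¹ • (M * Mᵀ) := mul_smul_comm _ _ _

lemma posDef_smul_mul_transpose {M : Matrix n n ℝ} {c : ℝ} (hc : 0 < c) (hM : M.det ≠ 0) :
    (c • (M * Mᵀ)).PosDef := by
  have hinj : Function.Injective M.vecMul :=
    vecMul_injective_iff_isUnit.2 ((isUnit_iff_isUnit_det M).2 hM.isUnit)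
  simpa only [conjTranspose_eq_transpose_of_trivial] using
    (PosDef.mul_conjTranspose_self M hinj).smul hc

variable {K : Type*} [Field K] {M : Matrix (Fin 2) (Fin 2) K} {c : K}

lemma sq_mul_det_inv_smul_mul_transpose (hc : c ≠ 0) (hM : M.det ≠ 0) :
    c ^ 2 * ((c * M.det)⁻¹ • (M * Mᵀ)).det = 1 := by
  rw [det_smul, det_mul, det_transpose, Fintype.card_fin]
  field_simp

lemma smul_vecMul_adjugate_inv_smul_mul_transpose (hc : c ≠ 0) (hM : M.det ≠ 0) :
    c • (((c * M.det)⁻¹ • Mᵀ) 1 ᵥ* ((c * M.det)⁻¹ • (M * Mᵀ)).adjugate) =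
      ![-((c * M.det)⁻¹ • Mᵀ) 0 1, ((c * M.det)⁻¹ • Mᵀ) 0 0] := by
  set s := (c * M.det)⁻¹ with hs
  have hscal : c * (s * s) * M.det = s := by
    rw [hs]
    field_simp
  have hprod : c • ((s • Mᵀ) * (s • (M * Mᵀ)).adjugate) = s • M.adjugate := by
    rw [adjugate_smul, Fintype.card_fin, pow_one, adjugate_mul_distrib, smul_mul_smul_comm,
      ← mul_assoc, mul_adjugate, det_transpose, smul_mul_assoc, one_mul, smul_smul, smul_smul,
      hscal]
  calc c • ((s • Mᵀ) 1 ᵥ* (s • (M * Mᵀ)).adjugate)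
      = (c • ((s • Mᵀ) * (s • (M * Mᵀ)).adjugate)) 1 := rfl
    _ = ![-(s • Mᵀ) 0 1, (s • Mᵀ) 0 0] := by
        rw [hprod]
        ext k
        fin_cases k <;> simp [adjugate_fin_two]

end MatrixAlgebra

section DirectionalDerivatives

variable {𝕜 E F : Type*} [RCLike 𝕜] [NormedAddCommGroup E] [NormedSpace 𝕜 E]
  [NormedAddCommGroup F] [NormedSpace 𝕜 F] {f : E → F} {y : E}

lemma contDiffAt_fderiv_apply_const {m n : WithTop ℕ∞} (hf : ContDiffAt 𝕜 n f y)
    (hmn : m + 1 ≤ n) (v : E) : ContDiffAt 𝕜 m (fun z => fderiv 𝕜 f z v) y :=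
  (hf.fderiv_right hmn).clm_apply contDiffAt_const

lemma fderiv_fderiv_apply_comm (hf : ContDiffAt 𝕜 2 f y) (v w : E) :
    fderiv 𝕜 (fun z => fderiv 𝕜 f z v) y w = fderiv 𝕜 (fun z => fderiv 𝕜 f z w) y v := by
  have hd : DifferentiableAt 𝕜 (fderiv 𝕜 f) y :=
    (hf.fderiv_right (m := 1) (by norm_num)).differentiableAt one_ne_zero
  have hsnd (a b : E) : fderiv 𝕜 (fun z => fderiv 𝕜 f z a) y b = fderiv 𝕜 (fderiv 𝕜 f) y b a := by
    simp [fderiv_clm_apply hd (differentiableAt_const a)]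
  rw [hsnd, hsnd]
  exact hf.isSymmSndFDerivAt (by simp) w v

end DirectionalDerivatives

lemma exists_contDiffAt_rightInverse {𝕜 E : Type*} [RCLike 𝕜] [NormedAddCommGroup E]
    [NormedSpace 𝕜 E] [FiniteDimensional 𝕜 E] {n : WithTop ℕ∞} {F : E → E} {p : E}
    (hF : ContDiffAt 𝕜 n F p) (hn : n ≠ 0) (hdet : (fderiv 𝕜 F p).det ≠ 0) :
    ∃ g : E → E, ContDiffAt 𝕜 n g (F p) ∧ g (F p) = p ∧ ∀ᶠ y in 𝓝 (F p), F (g y) = y := by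
  have : CompleteSpace E := FiniteDimensional.complete 𝕜 E
  have hF' : HasFDerivAt F
      ((fderiv 𝕜 F p).toContinuousLinearEquivOfDetNeZero hdet : E →L[𝕜] E) p := by
    simpa using (hF.differentiableAt hn).hasFDerivAt
  exact ⟨hF.localInverse hF' hn, hF.to_localInverse hF' hn, hF.localInverse_apply_image hF' hn,
    (hF.hasStrictFDerivAt' hF' hn).eventually_right_inverse⟩

section Jacobian

/-- The gradient `(∂₁f, ∂₂f)` of a function on the plane, as a coordinate vector. Unlike Mathlib's
`gradient`, it does not need an inner product, which `ℝ × ℝ` does not carry. -/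
noncomputable def gradVec (f : ℝ × ℝ → ℝ) (p : ℝ × ℝ) : Fin 2 → ℝ := fun i => fderiv ℝ f p (e2 i)

/-- The Jacobian matrix of a map of the plane; its rows are the gradients of the components. -/
noncomputable def jacobian (F : ℝ × ℝ → ℝ × ℝ) (p : ℝ × ℝ) : Matrix (Fin 2) (Fin 2) ℝ :=
  Matrix.of ![gradVec (fun q => (F q).1) p, gradVec (fun q => (F q).2) p]

variable {F G : ℝ × ℝ → ℝ × ℝ} {f : ℝ × ℝ → ℝ} {p : ℝ × ℝ}

lemma jacobian_congr (h : F =ᶠ[𝓝 p] G) : jacobian F p = jacobian G p := by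
  have h₁ : (fun q => (F q).1) =ᶠ[𝓝 p] fun q => (G q).1 := h.fun_comp Prod.fst
  have h₂ : (fun q => (F q).2) =ᶠ[𝓝 p] fun q => (G q).2 := h.fun_comp Prod.snd
  unfold jacobian gradVec
  rw [h₁.fderiv_eq, h₂.fderiv_eq]

lemma jacobian_id : jacobian id p = 1 := by
  ext i j
  fin_cases i <;> fin_cases j <;> simp [jacobian, gradVec, e2, fderiv_fst, fderiv_snd]

lemma toMatrix_fderiv (hF : DifferentiableAt ℝ F p) :
    LinearMap.toMatrix (Basis.finTwoProd ℝ) (Basis.finTwoProd ℝ) (fderiv ℝ F p) =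
      jacobian F p := by
  ext i j
  fin_cases i <;> fin_cases j <;>
    simp [LinearMap.toMatrix_apply, jacobian, gradVec, e2, fderiv.fst hF, fderiv.snd hF]

lemma det_fderiv (hF : DifferentiableAt ℝ F p) : (fderiv ℝ F p).det = (jacobian F p).det := by
  rw [← toMatrix_fderiv hF, LinearMap.det_toMatrix, ContinuousLinearMap.det]

lemma gradVec_comp (hf : DifferentiableAt ℝ f (F p)) (hF : DifferentiableAt ℝ F p) :
    gradVec (fun q => f (F q)) p = gradVec f (F p) ᵥ* jacobian F p := by
  ext k
  have hsplit (v : ℝ × ℝ) : v = v.1 • e2 0 + v.2 • e2 1 := by simp [e2]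
  calc fderiv ℝ (fun q => f (F q)) p (e2 k) = fderiv ℝ f (F p) (fderiv ℝ F p (e2 k)) := by
        rw [fderiv_fun_comp p hf hF, ContinuousLinearMap.comp_apply]
    _ = (gradVec f (F p) ᵥ* jacobian F p) k := by
        rw [hsplit (fderiv ℝ F p (e2 k)), map_add, map_smul, map_smul]
        simp [vecMul, dotProduct, jacobian, gradVec, fderiv.fst hF, fderiv.snd hF, mul_comm]

lemma jacobian_comp (hF : DifferentiableAt ℝ F (G p)) (hG : DifferentiableAt ℝ G p) :
    jacobian (fun q => F (G q)) p = jacobian F (G p) * jacobian G p := by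
  ext i k
  fin_cases i
  · exact congrFun (gradVec_comp hF.fst hG) k
  · exact congrFun (gradVec_comp hF.snd hG) k

lemma jacobian_mul_jacobian_of_rightInverse (hF : DifferentiableAt ℝ F (G p))
    (hG : DifferentiableAt ℝ G p) (h : ∀ᶠ q in 𝓝 p, F (G q) = q) :
    jacobian F (G p) * jacobian G p = 1 := by
  rw [← jacobian_comp hF hG, ← jacobian_id (p := p)]
  exact jacobian_congr h

end Jacobian

section Divergence

variable {u f h : ℝ × ℝ → ℝ} {G : ℝ × ℝ → Matrix (Fin 2) (Fin 2) ℝ} {y : ℝ × ℝ}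

/-- The divergence of a matrix field, taken along its first index: `k ↦ ∑ⱼ ∂ⱼ Gⱼₖ`. -/
noncomputable def matrixDiv (G : ℝ × ℝ → Matrix (Fin 2) (Fin 2) ℝ) (y : ℝ × ℝ) : Fin 2 → ℝ :=
  fun k => ∑ j, fderiv ℝ (fun z => G z j k) y (e2 j)

/-- The gradient rotated by a quarter turn, `(-∂₂h, ∂₁h)`. -/
noncomputable def rotGrad (h : ℝ × ℝ → ℝ) (y : ℝ × ℝ) : Fin 2 → ℝ :=
  ![-gradVec h y 1, gradVec h y 0]

/-- Abreu's equation `∑ⱼₖ ∂ⱼ∂ₖ uʲᵏ = 0` at a point, where `uʲᵏ` are the entries of the inverse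
Hessian. -/
def SatisfiesAbreuAt (u : ℝ × ℝ → ℝ) (x : ℝ × ℝ) : Prop :=
  ∑ j : Fin 2, ∑ k : Fin 2,
    fderiv ℝ (fun y => fderiv ℝ (fun z => ((Hess u z)⁻¹) j k) y (e2 j)) x (e2 k) = 0

lemma matrixDiv_congr {G' : ℝ × ℝ → Matrix (Fin 2) (Fin 2) ℝ} (hG : G =ᶠ[𝓝 y] G') :
    matrixDiv G y = matrixDiv G' y := by
  ext k
  refine Finset.sum_congr rfl fun j _ => ?_
  have hjk : (fun z => G z j k) =ᶠ[𝓝 y] fun z => G' z j k := hG.fun_comp fun N => N j k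
  rw [hjk.fderiv_eq]

lemma matrixDiv_smul (hf : DifferentiableAt ℝ f y)
    (hG : ∀ j k, DifferentiableAt ℝ (fun z => G z j k) y) :
    matrixDiv (fun z => f z • G z) y = gradVec f y ᵥ* G y + f y • matrixDiv G y := by
  ext k
  have hprod (j : Fin 2) : fderiv ℝ (fun z => f z * G z j k) y (e2 j) =
      fderiv ℝ f y (e2 j) * G y j k + f y * fderiv ℝ (fun z => G z j k) y (e2 j) := by
    rw [fderiv_fun_mul hf (hG j k)]
    change f y * fderiv ℝ (fun z => G z j k) y (e2 j) + G y j k * fderiv ℝ f y (e2 j) = _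
    ring
  calc ∑ j, fderiv ℝ (fun z => f z * G z j k) y (e2 j)
      = ∑ j, fderiv ℝ f y (e2 j) * G y j k + f y * ∑ j, fderiv ℝ (fun z => G z j k) y (e2 j) := by
        rw [Finset.sum_congr rfl fun j _ => hprod j, Finset.sum_add_distrib, ← Finset.mul_sum]
    _ = (gradVec f y ᵥ* G y + f y • matrixDiv G y) k := rfl

lemma sum_sum_fderiv_fderiv_eq_sum_fderiv_matrixDiv
    (hG : ∀ j k, ContDiffAt ℝ 2 (fun z => G z j k) y) :
    ∑ j, ∑ k, fderiv ℝ (fun z => fderiv ℝ (fun w => G w j k) z (e2 j)) y (e2 k) =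
      ∑ k, fderiv ℝ (fun z => matrixDiv G z k) y (e2 k) := by
  have hd (j k : Fin 2) : DifferentiableAt ℝ (fun z => fderiv ℝ (fun w => G w j k) z (e2 j)) y :=
    (contDiffAt_fderiv_apply_const (m := 1) (hG j k) (by norm_num) _).differentiableAt one_ne_zero
  rw [Finset.sum_comm]
  refine Finset.sum_congr rfl fun k _ => ?_
  simp only [matrixDiv]
  rw [fderiv_fun_sum fun j _ => hd j k, _root_.sum_apply]

lemma sum_fderiv_rotGrad (hh : ContDiffAt ℝ 2 h y) :
    ∑ k, fderiv ℝ (fun z => rotGrad h z k) y (e2 k) = 0 := by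
  simp [rotGrad, gradVec, Fin.sum_univ_two, fderiv_fun_neg,
    fderiv_fderiv_apply_comm hh (e2 1) (e2 0)]

lemma contDiffAt_Hess {m n : WithTop ℕ∞} (hu : ContDiffAt ℝ n u y) (hmn : m + 1 + 1 ≤ n)
    (i j : Fin 2) : ContDiffAt ℝ m (fun z => Hess u z i j) y :=
  contDiffAt_fderiv_apply_const (contDiffAt_fderiv_apply_const hu hmn (e2 i)) le_rfl (e2 j)

lemma contDiffAt_adjugate_Hess {m n : WithTop ℕ∞} (hu : ContDiffAt ℝ n u y) (hmn : m + 1 + 1 ≤ n)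
    (i j : Fin 2) : ContDiffAt ℝ m (fun z => (Hess u z).adjugate i j) y := by
  simp only [adjugate_fin_two]
  fin_cases i <;> fin_cases j
  · exact contDiffAt_Hess hu hmn 1 1
  · exact (contDiffAt_Hess hu hmn 0 1).neg
  · exact (contDiffAt_Hess hu hmn 1 0).neg
  · exact contDiffAt_Hess hu hmn 0 0

lemma matrixDiv_adjugate_Hess (hu : ContDiffAt ℝ 3 u y) :
    matrixDiv (fun z => (Hess u z).adjugate) y = 0 := by
  have hcomm (i : Fin 2) : fderiv ℝ (fun z => Hess u z i 1) y (e2 0) =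
      fderiv ℝ (fun z => Hess u z i 0) y (e2 1) :=
    fderiv_fderiv_apply_comm (contDiffAt_fderiv_apply_const hu (by norm_num) (e2 i)) _ _
  ext k
  fin_cases k <;> simp [matrixDiv, Fin.sum_univ_two, adjugate_fin_two, fderiv_fun_neg, hcomm]

lemma matrixDiv_sq_smul_adjugate_Hess {r : ℝ × ℝ → ℝ} (hu : ContDiffAt ℝ 3 u y)
    (hr : DifferentiableAt ℝ r y) :
    matrixDiv (fun z => r z ^ 2 • (Hess u z).adjugate) y =
      (2 : ℝ) • r y • (gradVec r y ᵥ* (Hess u y).adjugate) := by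
  have hgrad : gradVec (fun z => r z ^ 2) y = (2 * r y) • gradVec r y := by
    ext i
    simp [gradVec, fderiv_fun_pow 2 hr]
  rw [matrixDiv_smul (hr.fun_pow 2) fun j k =>
      (contDiffAt_adjugate_Hess hu (m := 1) (by norm_num) j k).differentiableAt one_ne_zero,
    matrixDiv_adjugate_Hess hu, smul_zero, add_zero, hgrad, smul_vecMul, mul_smul]

theorem satisfiesAbreuAt_of_smul_vecMul_adjugate_Hess_eq_rotGrad {r : ℝ × ℝ → ℝ}
    (hu : ContDiffAt ℝ 4 u y) (hh : ContDiffAt ℝ 2 h y) (hr : ContDiffAt ℝ 2 r y)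
    (hdet : ∀ᶠ z in 𝓝 y, r z ^ 2 * (Hess u z).det = 1)
    (hconj : ∀ᶠ z in 𝓝 y, r z • (gradVec r z ᵥ* (Hess u z).adjugate) = rotGrad h z) :
    SatisfiesAbreuAt u y := by
  have hinv : (fun z => (Hess u z)⁻¹) =ᶠ[𝓝 y] fun z => r z ^ 2 • (Hess u z).adjugate := by
    filter_upwards [hdet] with z hz
    refine inv_eq_right_inv ?_
    rw [mul_smul_comm, mul_adjugate, smul_smul, hz, one_smul]
  have hinv_smooth (j k : Fin 2) : ContDiffAt ℝ 2 (fun z => (Hess u z)⁻¹ j k) y :=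
    ((hr.pow 2).mul (contDiffAt_adjugate_Hess hu (by norm_num) j k)).congr_of_eventuallyEq
      (hinv.fun_comp fun N => N j k)
  have hdiv : matrixDiv (fun z => (Hess u z)⁻¹) =ᶠ[𝓝 y] fun z => (2 : ℝ) • rotGrad h z := by
    filter_upwards [hinv.eventuallyEq_nhds, hconj, hu.eventually (by simp),
      hr.eventually (by simp)] with z hinv_z hconj_z hu_z hr_z
    rw [matrixDiv_congr hinv_z, matrixDiv_sq_smul_adjugate_Hess (hu_z.of_le (by norm_num))
      (hr_z.differentiableAt two_ne_zero), hconj_z]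
  calc _ = ∑ k, fderiv ℝ (fun z => matrixDiv (fun w => (Hess u w)⁻¹) z k) y (e2 k) :=
        sum_sum_fderiv_fderiv_eq_sum_fderiv_matrixDiv hinv_smooth
    _ = ∑ k, (2 : ℝ) • fderiv ℝ (fun z => rotGrad h z k) y (e2 k) := by
        refine Finset.sum_congr rfl fun k _ => ?_
        have hdiv_k : (fun z => matrixDiv (fun w => (Hess u w)⁻¹) z k) =ᶠ[𝓝 y]
            (2 : ℝ) • fun z => rotGrad h z k := hdiv.fun_comp fun V => V k
        rw [hdiv_k.fderiv_eq, fderiv_const_smul_field]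
        rfl
    _ = 0 := by rw [← Finset.smul_sum, sum_fderiv_rotGrad hh, smul_zero]

end Divergence

section Donaldson

variable {X Ξ : ℝ × ℝ → ℝ × ℝ} {u : ℝ × ℝ → ℝ} {p : ℝ × ℝ}

lemma jacobian_pdH_pdr_eq_Hess (y : ℝ × ℝ) :
    jacobian (fun z => (pdH u z, pdr u z)) y = Hess u y := by
  ext i j
  fin_cases i <;> rfl

lemma jacobian_eq_Hess_mul_jacobian (hu : ContDiffAt ℝ 2 u (X p)) (hX : DifferentiableAt ℝ X p)
    (hgrad : ∀ᶠ q in 𝓝 p, Ξ q = (pdH u (X q), pdr u (X q))) :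
    jacobian Ξ p = Hess u (X p) * jacobian X p := by
  have hd (v : ℝ × ℝ) : DifferentiableAt ℝ (fun z => fderiv ℝ u z v) (X p) :=
    (contDiffAt_fderiv_apply_const (m := 1) hu (by norm_num) v).differentiableAt one_ne_zero
  rw [jacobian_congr hgrad, ← jacobian_pdH_pdr_eq_Hess]
  exact jacobian_comp ((hd (1, 0)).prodMk (hd (0, 1))) hX

theorem satisfiesAbreuAt_of_jacobian_eq {M : ℝ × ℝ → Matrix (Fin 2) (Fin 2) ℝ}
    (hu : ContDiffAt ℝ 4 u (X p)) (hX : ContDiffAt ℝ 2 X p)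
    (hr : ∀ᶠ q in 𝓝 p, q.2 ≠ 0) (hM : ∀ᶠ q in 𝓝 p, (M q).det ≠ 0)
    (hjac : ∀ᶠ q in 𝓝 p, jacobian X q = q.2 • (M q).adjugateᵀ)
    (hHess : ∀ᶠ q in 𝓝 p, Hess u (X q) = (q.2 * (M q).det)⁻¹ • (M q * (M q)ᵀ)) :
    SatisfiesAbreuAt u (X p) := by
  have hXdet : (fderiv ℝ X p).det ≠ 0 := by
    rw [det_fderiv (hX.differentiableAt two_ne_zero), hjac.self_of_nhds]
    exact det_ne_zero_of_left_inverse
      (inv_smul_transpose_mul_smul_adjugate_transpose hr.self_of_nhds hM.self_of_nhds)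
  obtain ⟨g, hg, hgp, hXg⟩ := exists_contDiffAt_rightInverse hX two_ne_zero hXdet
  have hg_tendsto : Tendsto g (𝓝 (X p)) (𝓝 p) := by
    simpa only [ContinuousAt, hgp] using hg.continuousAt
  have hHess_g : ∀ᶠ y in 𝓝 (X p), (g y).2 ≠ 0 ∧ (M (g y)).det ≠ 0 ∧
      Hess u y = ((g y).2 * (M (g y)).det)⁻¹ • (M (g y) * (M (g y))ᵀ) := by
    filter_upwards [hXg, hg_tendsto.eventually (hr.and (hM.and hHess))] with y hy hy'
    rwa [hy] at hy'
  have hjac_g : ∀ᶠ y in 𝓝 (X p), jacobian g y = ((g y).2 * (M (g y)).det)⁻¹ • (M (g y))ᵀ := by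
    filter_upwards [hXg.eventually_nhds, hg.eventually (by simp), hHess_g,
      hg_tendsto.eventually (hjac.and (hX.eventually (by simp)))]
      with y hXg_y hg_y ⟨hr_y, hM_y, _⟩ ⟨hjac_y, hX_y⟩
    have hright := jacobian_mul_jacobian_of_rightInverse (hX_y.differentiableAt two_ne_zero)
      (hg_y.differentiableAt two_ne_zero) hXg_y
    rw [hjac_y] at hright
    exact (left_inv_eq_right_inv
      (inv_smul_transpose_mul_smul_adjugate_transpose hr_y hM_y) hright).symm
  refine satisfiesAbreuAt_of_smul_vecMul_adjugate_Hess_eq_rotGrad hu hg.fst hg.snd ?_ ?_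
  · filter_upwards [hHess_g] with y ⟨hr_y, hM_y, hHess_y⟩
    rw [hHess_y]
    exact sq_mul_det_inv_smul_mul_transpose hr_y hM_y
  · filter_upwards [hHess_g, hjac_g] with y ⟨hr_y, hM_y, hHess_y⟩ hjac_y
    change (g y).2 • (jacobian g y 1 ᵥ* (Hess u y).adjugate) =
      ![-jacobian g y 0 1, jacobian g y 0 0]
    rw [hHess_y, hjac_y]
    exact smul_vecMul_adjugate_inv_smul_mul_transpose hr_y hM_y

end Donaldson

theorem donaldson_construction_general
    (B : Set (ℝ × ℝ)) (hBopen : IsOpen B) (hBhalf : ∀ p ∈ B, 0 < p.2)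
    (ξ₁ ξ₂ x₁ x₂ : ℝ × ℝ → ℝ)
    (hdet : ∀ p ∈ B, 0 < pdH ξ₁ p * pdr ξ₂ p - pdr ξ₁ p * pdH ξ₂ p)
    (hx₁ : ContDiffOn ℝ 2 x₁ B) (hx₂ : ContDiffOn ℝ 2 x₂ B)
    (h1 : ∀ p ∈ B, pdH x₁ p = p.2 * pdr ξ₂ p)
    (h2 : ∀ p ∈ B, pdr x₁ p = -(p.2 * pdH ξ₂ p))
    (h3 : ∀ p ∈ B, pdH x₂ p = -(p.2 * pdr ξ₁ p))
    (h4 : ∀ p ∈ B, pdr x₂ p = p.2 * pdH ξ₁ p)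
    (u : ℝ × ℝ → ℝ) (hu : ∀ p ∈ B, ContDiffAt ℝ 4 u (x₁ p, x₂ p))
    (hgrad₁ : ∀ p ∈ B, pdH u (x₁ p, x₂ p) = ξ₁ p)
    (hgrad₂ : ∀ p ∈ B, pdr u (x₁ p, x₂ p) = ξ₂ p) :
    ∀ p ∈ B, (Hess u (x₁ p, x₂ p)).PosDef ∧ SatisfiesAbreuAt u (x₁ p, x₂ p) := by
  set X : ℝ × ℝ → ℝ × ℝ := fun q => (x₁ q, x₂ q)
  set M : ℝ × ℝ → Matrix (Fin 2) (Fin 2) ℝ := jacobian fun q => (ξ₁ q, ξ₂ q)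
  have hM (q) (hq : q ∈ B) : 0 < (M q).det := (hdet q hq).trans_eq (det_fin_two (M q)).symm
  have hX (q) (hq : q ∈ B) : ContDiffAt ℝ 2 X q :=
    (hx₁.prodMk hx₂).contDiffAt (hBopen.mem_nhds hq)
  have hjac (q) (hq : q ∈ B) : jacobian X q = q.2 • (M q).adjugateᵀ := by
    rw [adjugate_fin_two]
    ext i j
    fin_cases i <;> fin_cases j
    · exact h1 q hq
    · exact (h2 q hq).trans (mul_neg _ _).symm
    · exact (h3 q hq).trans (mul_neg _ _).symm
    · exact h4 q hq
  have hHess (q) (hq : q ∈ B) : Hess u (X q) = (q.2 * (M q).det)⁻¹ • (M q * (M q)ᵀ) := by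
    refine eq_inv_smul_mul_transpose_of_eq_mul_smul_adjugate_transpose (hBhalf q hq).ne'
      (hM q hq).ne' ?_
    rw [← hjac q hq]
    refine jacobian_eq_Hess_mul_jacobian ((hu q hq).of_le (by norm_num))
      ((hX q hq).differentiableAt two_ne_zero) ?_
    filter_upwards [hBopen.mem_nhds hq] with z hz
    rw [hgrad₁ z hz, hgrad₂ z hz]
  intro p hp
  have hBnhds := hBopen.eventually_mem hp
  constructor
  · rw [hHess p hp]
    exact posDef_smul_mul_transpose (inv_pos.2 (mul_pos (hBhalf p hp) (hM p hp))) (hM p hp).ne'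
  · exact satisfiesAbreuAt_of_jacobian_eq (hu p hp) (hX p hp)
      (hBnhds.mono fun q hq => (hBhalf q hq).ne') (hBnhds.mono fun q hq => (hM q hq).ne')
      (hBnhds.mono hjac) (hBnhds.mono hHess)

/-- Donaldson's theorem (Joyce's construction in action-angle coordinates).
If `ξ₁, ξ₂` are smooth axi-symmetric harmonic functions on an open subset `B` of the
half-plane `{r > 0}` with `det Dξ > 0`, if `x = (x₁, x₂)` is a smooth map on `B`
satisfying `∂x₁/∂H = r·∂ξ₂/∂r`, `∂x₁/∂r = −r·∂ξ₂/∂H`, `∂x₂/∂H = −r·∂ξ₁/∂r`,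
`∂x₂/∂r = r·∂ξ₁/∂H`, injective with open image `U`, and if `u` is smooth on `U` with
`∂u/∂x₁ ∘ x = ξ₁` and `∂u/∂x₂ ∘ x = ξ₂`, then the Hessian of `u` is positive definite
on `U` and `u` satisfies Abreu's equation `∑_{j,k} ∂²u^{jk}/∂x_j∂x_k = 0` on `U`,
where `(u^{jk})` is the inverse matrix of the Hessian of `u`. -/
theorem donaldson_construction
    (B : Set (ℝ × ℝ)) (hBopen : IsOpen B) (hBhalf : ∀ p ∈ B, 0 < p.2)
    (ξ₁ ξ₂ x₁ x₂ : ℝ × ℝ → ℝ)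
    (hξ₁ : ContDiffOn ℝ (⊤ : ℕ∞) ξ₁ B) (hξ₂ : ContDiffOn ℝ (⊤ : ℕ∞) ξ₂ B)
    (hharm₁ : ∀ p ∈ B, pdH (pdH ξ₁) p + pdr (pdr ξ₁) p + (1 / p.2) * pdr ξ₁ p = 0)
    (hharm₂ : ∀ p ∈ B, pdH (pdH ξ₂) p + pdr (pdr ξ₂) p + (1 / p.2) * pdr ξ₂ p = 0)
    (hdet : ∀ p ∈ B, 0 < pdH ξ₁ p * pdr ξ₂ p - pdr ξ₁ p * pdH ξ₂ p)
    (hx₁ : ContDiffOn ℝ (⊤ : ℕ∞) x₁ B) (hx₂ : ContDiffOn ℝ (⊤ : ℕ∞) x₂ B)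
    (h1 : ∀ p ∈ B, pdH x₁ p = p.2 * pdr ξ₂ p)
    (h2 : ∀ p ∈ B, pdr x₁ p = -(p.2 * pdH ξ₂ p))
    (h3 : ∀ p ∈ B, pdH x₂ p = -(p.2 * pdr ξ₁ p))
    (h4 : ∀ p ∈ B, pdr x₂ p = p.2 * pdH ξ₁ p)
    (hinj : Set.InjOn (fun p => (x₁ p, x₂ p)) B)
    (U : Set (ℝ × ℝ)) (hUimage : U = (fun p => (x₁ p, x₂ p)) '' B) (hUopen : IsOpen U)
    (u : ℝ × ℝ → ℝ) (hu : ContDiffOn ℝ (⊤ : ℕ∞) u U)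
    (hgrad₁ : ∀ p ∈ B, pdH u (x₁ p, x₂ p) = ξ₁ p)
    (hgrad₂ : ∀ p ∈ B, pdr u (x₁ p, x₂ p) = ξ₂ p) :
    (∀ x ∈ U, (Hess u x).PosDef) ∧
    (∀ x ∈ U, ∑ j : Fin 2, ∑ k : Fin 2,
        fderiv ℝ (fun y => fderiv ℝ (fun z => ((Hess u z)⁻¹) j k) y (e2 j)) x (e2 k)
          = 0) := by
  subst hUimage
  have smooth {m : ℕ} : (m : WithTop ℕ∞) ≤ (⊤ : ℕ∞) := mod_cast le_top
  have main := donaldson_construction_general B hBopen hBhalf ξ₁ ξ₂ x₁ x₂ hdet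
    (hx₁.of_le smooth) (hx₂.of_le smooth) h1 h2 h3 h4 u
    (fun p hp => (hu.contDiffAt (hUopen.mem_nhds ⟨p, hp, rfl⟩)).of_le smooth) hgrad₁ hgrad₂
  exact ⟨Set.forall_mem_image.2 fun p hp => (main p hp).1,
    Set.forall_mem_image.2 fun p hp => (main p hp).2⟩
end

section
/- Let B be an open subset of the half-plane ℍ = {(H,r) ∈ ℝ² : r > 0}. Let ξ : B → ℝ be a C² function satisfying the axi-symmetric harmonic equation ∂²ξ/∂H² + ∂²ξ/∂r² + (1/r)·∂ξ/∂r = 0 on B, and let μ : B → ℝ be a C² function satisfying ∂μ/∂H = r·∂ξ/∂r and ∂μ/∂r = −r·∂ξ/∂H on B. Then the function f := μ/r² satisfies ∂²f/∂H² + ∂²f/∂r² + (3/r)·∂f/∂r = 0 at every point of B. -/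
/-!
Write `L_α = ∂²/∂H² + ∂²/∂r² + (α/r) ∂/∂r`. Cross-differentiating the generalized Cauchy–Riemann
equations `μ_H = r^k ξ_r`, `μ_r = -r^k ξ_H` and cancelling the mixed derivatives of `ξ` gives
`L_{-k} μ = 0`. Weinstein's correspondence `L_α (r^(1-α) μ) = r^(1-α) L_{2-α} μ` with `α = k + 2`
then turns this into `L_{k+2} (μ / r^(k+1)) = 0`, and Wright's lemma is the case `k = 1`.
-/

section Weinstein

open Filter Topology

variable {f g μ ξ : ℝ × ℝ → ℝ} {p : ℝ × ℝ}

theorem pdH_eventuallyEq (h : f =ᶠ[𝓝 p] g) : pdH f =ᶠ[𝓝 p] pdH g :=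
  h.fderiv.fun_comp fun L ↦ L (1, 0)

theorem pdr_eventuallyEq (h : f =ᶠ[𝓝 p] g) : pdr f =ᶠ[𝓝 p] pdr g :=
  h.fderiv.fun_comp fun L ↦ L (0, 1)

theorem differentiableAt_fderiv_of_contDiffAt_two (hf : ContDiffAt ℝ 2 f p) :
    DifferentiableAt ℝ (fderiv ℝ f) p :=
  (hf.fderiv_right (m := 1) (by norm_num)).differentiableAt one_ne_zero

theorem differentiableAt_pdH (hf : ContDiffAt ℝ 2 f p) : DifferentiableAt ℝ (pdH f) p :=
  (differentiableAt_fderiv_of_contDiffAt_two hf).clm_apply (differentiableAt_const _)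

theorem differentiableAt_pdr (hf : ContDiffAt ℝ 2 f p) : DifferentiableAt ℝ (pdr f) p :=
  (differentiableAt_fderiv_of_contDiffAt_two hf).clm_apply (differentiableAt_const _)

theorem pdH_pdr_comm (hf : ContDiffAt ℝ 2 f p) : pdH (pdr f) p = pdr (pdH f) p := by
  have hf' := differentiableAt_fderiv_of_contDiffAt_two hf
  have fderiv_fderiv_apply (v w : ℝ × ℝ) :
      fderiv ℝ (fun q ↦ fderiv ℝ f q v) p w = fderiv ℝ (fderiv ℝ f) p w v := by
    simp [fderiv_clm_apply hf' (differentiableAt_const v)]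
  calc pdH (pdr f) p = fderiv ℝ (fderiv ℝ f) p (1, 0) (0, 1) := fderiv_fderiv_apply _ _
    _ = fderiv ℝ (fderiv ℝ f) p (0, 1) (1, 0) := hf.isSymmSndFDerivAt (by simp) _ _
    _ = pdr (pdH f) p := (fderiv_fderiv_apply _ _).symm

theorem hasFDerivAt_rpow_snd_mul (a : ℝ) (hp : p.2 ≠ 0) (hg : DifferentiableAt ℝ g p) :
    HasFDerivAt (fun q ↦ q.2 ^ a * g q)
      (p.2 ^ a • fderiv ℝ g p + g p • (a * p.2 ^ (a - 1)) • ContinuousLinearMap.snd ℝ ℝ ℝ) p :=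
  (hasFDerivAt_snd.rpow_const (Or.inl hp)).mul hg.hasFDerivAt

theorem pdH_rpow_snd_mul (a : ℝ) (hp : p.2 ≠ 0) (hg : DifferentiableAt ℝ g p) :
    pdH (fun q ↦ q.2 ^ a * g q) p = p.2 ^ a * pdH g p := by
  simp [pdH, (hasFDerivAt_rpow_snd_mul a hp hg).fderiv]

theorem pdr_rpow_snd_mul (a : ℝ) (hp : p.2 ≠ 0) (hg : DifferentiableAt ℝ g p) :
    pdr (fun q ↦ q.2 ^ a * g q) p = p.2 ^ a * pdr g p + a * p.2 ^ (a - 1) * g p := by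
  simp [pdr, (hasFDerivAt_rpow_snd_mul a hp hg).fderiv, mul_comm (g p)]

/-- Weinstein's operator `f_HH + f_rr + (α/r) f_r` of generalized axially symmetric potential
theory. For `α = n - 2` it is the Laplacian of `ℝⁿ` on functions of the height `H` along an axis
and the distance `r` to that axis; on the axis itself the singular term is `0` by convention. -/
noncomputable def weinstein (α : ℝ) (f : ℝ × ℝ → ℝ) (p : ℝ × ℝ) : ℝ :=
  pdH (pdH f) p + pdr (pdr f) p + (α / p.2) * pdr f p

theorem weinstein_congr (α : ℝ) (h : f =ᶠ[𝓝 p] g) : weinstein α f p = weinstein α g p := by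
  simp only [weinstein, (pdH_eventuallyEq (pdH_eventuallyEq h)).eq_of_nhds,
    (pdr_eventuallyEq (pdr_eventuallyEq h)).eq_of_nhds, (pdr_eventuallyEq h).eq_of_nhds]

theorem pdH_pdH_rpow_snd_mul (a : ℝ) (hp : p.2 ≠ 0) (hg : ContDiffAt ℝ 2 g p) :
    pdH (pdH fun q ↦ q.2 ^ a * g q) p = p.2 ^ a * pdH (pdH g) p := by
  have first_deriv : pdH (fun q ↦ q.2 ^ a * g q) =ᶠ[𝓝 p] fun q ↦ q.2 ^ a * pdH g q := by
    filter_upwards [continuousAt_snd.eventually_ne hp, hg.eventually (by simp)] with q hq hgq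
    exact pdH_rpow_snd_mul a hq (hgq.differentiableAt two_ne_zero)
  rw [(pdH_eventuallyEq first_deriv).eq_of_nhds, pdH_rpow_snd_mul a hp (differentiableAt_pdH hg)]

theorem pdr_pdr_rpow_snd_mul (a : ℝ) (hp : p.2 ≠ 0) (hg : ContDiffAt ℝ 2 g p) :
    pdr (pdr fun q ↦ q.2 ^ a * g q) p =
      p.2 ^ a * pdr (pdr g) p + 2 * a * p.2 ^ (a - 1) * pdr g p
        + a * (a - 1) * p.2 ^ (a - 2) * g p := by
  have hg₁ := hg.differentiableAt two_ne_zero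
  have hgr := differentiableAt_pdr hg
  have first_deriv : pdr (fun q ↦ q.2 ^ a * g q) =ᶠ[𝓝 p]
      fun q ↦ q.2 ^ a * pdr g q + q.2 ^ (a - 1) * (a * g q) := by
    filter_upwards [continuousAt_snd.eventually_ne hp, hg.eventually (by simp)] with q hq hgq
    rw [pdr_rpow_snd_mul a hq (hgq.differentiableAt two_ne_zero)]
    ring
  have pdr_add : pdr (fun q ↦ q.2 ^ a * pdr g q + q.2 ^ (a - 1) * (a * g q)) p =
      pdr (fun q ↦ q.2 ^ a * pdr g q) p + pdr (fun q ↦ q.2 ^ (a - 1) * (a * g q)) p := by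
    rw [pdr, fderiv_fun_add (hasFDerivAt_rpow_snd_mul a hp hgr).differentiableAt
      (hasFDerivAt_rpow_snd_mul (a - 1) hp (hg₁.const_mul a)).differentiableAt]
    rfl
  have pdr_const_mul : pdr (fun q ↦ a * g q) p = a * pdr g p := by
    simp [pdr, fderiv_const_mul hg₁]
  rw [(pdr_eventuallyEq first_deriv).eq_of_nhds, pdr_add, pdr_rpow_snd_mul a hp hgr,
    pdr_rpow_snd_mul (a - 1) hp (hg₁.const_mul a), pdr_const_mul]
  ring_nf

theorem weinstein_rpow_snd_mul (α : ℝ) (hp : 0 < p.2) (hg : ContDiffAt ℝ 2 g p) :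
    weinstein α (fun q ↦ q.2 ^ (1 - α) * g q) p = p.2 ^ (1 - α) * weinstein (2 - α) g p := by
  rw [weinstein, pdH_pdH_rpow_snd_mul _ hp.ne' hg, pdr_pdr_rpow_snd_mul _ hp.ne' hg,
    pdr_rpow_snd_mul _ hp.ne' (hg.differentiableAt two_ne_zero), weinstein,
    Real.rpow_sub_one hp.ne', Real.rpow_sub hp _ 2, Real.rpow_two]
  field_simp
  ring

theorem weinstein_neg_eq_zero_of_conjugate {k : ℝ} (hp : p.2 ≠ 0) (hξ : ContDiffAt ℝ 2 ξ p)
    (hμH : ∀ᶠ q in 𝓝 p, pdH μ q = q.2 ^ k * pdr ξ q)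
    (hμr : ∀ᶠ q in 𝓝 p, pdr μ q = -(q.2 ^ k * pdH ξ q)) :
    weinstein (-k) μ p = 0 := by
  have hHH : pdH (pdH μ) p = p.2 ^ k * pdr (pdH ξ) p := by
    rw [(pdH_eventuallyEq hμH).eq_of_nhds, pdH_rpow_snd_mul k hp (differentiableAt_pdr hξ),
      pdH_pdr_comm hξ]
  have hrr : pdr (pdr μ) p = -(p.2 ^ k * pdr (pdH ξ) p + k * p.2 ^ (k - 1) * pdH ξ p) := by
    rw [(pdr_eventuallyEq hμr).eq_of_nhds, ← pdr_rpow_snd_mul k hp (differentiableAt_pdH hξ)]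
    simp [pdr]
  rw [weinstein, hHH, hrr, hμr.self_of_nhds, Real.rpow_sub_one hp]
  field_simp
  ring

end Weinstein

theorem wrights_lemma_general (k : ℝ)
    (B : Set (ℝ × ℝ)) (hBopen : IsOpen B) (hBhalf : ∀ p ∈ B, 0 < p.2)
    (ξ : ℝ × ℝ → ℝ) (hξ : ContDiffOn ℝ 2 ξ B)
    (μ : ℝ × ℝ → ℝ) (hμ : ContDiffOn ℝ 2 μ B)
    (hμH : ∀ p ∈ B, pdH μ p = p.2 ^ k * pdr ξ p)
    (hμr : ∀ p ∈ B, pdr μ p = -(p.2 ^ k * pdH ξ p)) :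
    ∀ p ∈ B, weinstein (k + 2) (fun q ↦ μ q / q.2 ^ (k + 1)) p = 0 := by
  intro p hp
  have hB : B ∈ nhds p := hBopen.mem_nhds hp
  have hμ₀ : weinstein (2 - (k + 2)) μ p = 0 := by
    rw [sub_add_cancel_right]
    exact weinstein_neg_eq_zero_of_conjugate (hBhalf p hp).ne' (hξ.contDiffAt hB)
      (Filter.eventually_of_mem hB hμH) (Filter.eventually_of_mem hB hμr)
  have hdiv : (fun q ↦ μ q / q.2 ^ (k + 1)) =ᶠ[nhds p] fun q ↦ q.2 ^ (1 - (k + 2)) * μ q := by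
    filter_upwards [hB] with q hq
    rw [show 1 - (k + 2) = -(k + 1) by ring, Real.rpow_neg (hBhalf q hq).le, inv_mul_eq_div]
  rw [weinstein_congr _ hdiv, weinstein_rpow_snd_mul _ (hBhalf p hp) (hμ.contDiffAt hB), hμ₀,
    mul_zero]

/-- Wright's lemma: if `ξ` is a `C²` solution of the axi-symmetric harmonic equation
`ξ_HH + ξ_rr + (1/r)·ξ_r = 0` on an open subset `B` of the half-plane `{r > 0}`, and `μ`
is a `C²` function with `∂μ/∂H = r·∂ξ/∂r` and `∂μ/∂r = −r·∂ξ/∂H` on `B`, then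
`f := μ/r²` satisfies `f_HH + f_rr + (3/r)·f_r = 0` on `B` (i.e. `f` is an
axi-symmetric harmonic function on `ℝ⁵`). -/
theorem wrights_lemma
    (B : Set (ℝ × ℝ)) (hBopen : IsOpen B) (hBhalf : ∀ p ∈ B, 0 < p.2)
    (ξ : ℝ × ℝ → ℝ) (hξ : ContDiffOn ℝ 2 ξ B)
    (hharm : ∀ p ∈ B,
      pdH (pdH ξ) p + pdr (pdr ξ) p + (1 / p.2) * pdr ξ p = 0)
    (μ : ℝ × ℝ → ℝ) (hμ : ContDiffOn ℝ 2 μ B)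
    (hμH : ∀ p ∈ B, pdH μ p = p.2 * pdr ξ p)
    (hμr : ∀ p ∈ B, pdr μ p = -(p.2 * pdH ξ p)) :
    ∀ p ∈ B,
      pdH (pdH (fun q => μ q / q.2 ^ 2)) p
        + pdr (pdr (fun q => μ q / q.2 ^ 2)) p
        + (3 / p.2) * pdr (fun q => μ q / q.2 ^ 2) p = 0 := by
  have h := wrights_lemma_general 1 B hBopen hBhalf ξ hξ μ hμ (by simpa using hμH)
    (by simpa using hμr)
  simpa only [weinstein, one_add_one_eq_two, Real.rpow_two, (by norm_num : (1 : ℝ) + 2 = 3)] using h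
end

section
/- There exists a constant C > 0 such that for every R > 0, the integral over the sphere ∂B(0,R) = {w ∈ ℝ⁵ : ‖w‖ = R} of the function w ↦ 1/(w₂²+w₃²+w₄²+w₅²) with respect to the 4-dimensional surface (Hausdorff) measure on the sphere satisfies ∫_{∂B(0,R)} (w₂²+w₃²+w₄²+w₅²)^{−1} dσ(w) ≤ C·R². -/
open MeasureTheory

/-!
For a unit vector `v`, the inverse stereographic projection from `v` is `1`-Lipschitz and maps the
closed ball of radius `2` in the hyperplane `(ℝ ∙ v)ᗮ` onto the hemisphere opposite to `v`. On that
ball, the distance from the image of `w` to the axis `ℝ ∙ v` lies between `‖w‖ / 2` and `‖w‖`, so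
the integral of its `q`-th power over the hemisphere is at most `2 ^ |q| * ∫ ‖w‖ ^ q`, which is
finite as soon as `-q` is less than the dimension of the hyperplane. The projection from `-v` covers
the other hemisphere, and homogeneity reduces the sphere of radius `R` to the unit sphere.
-/

open Metric Module Set
open scoped ENNReal NNReal RealInnerProductSpace

lemma setLIntegral_image_hausdorffMeasure_le {X Y : Type*}
    [EMetricSpace X] [MeasurableSpace X] [BorelSpace X]
    [EMetricSpace Y] [MeasurableSpace Y] [BorelSpace Y] {K : ℝ≥0} {f : X → Y}
    (hf : LipschitzWith K f) {d : ℝ} (hd : 0 ≤ d) (g : Y → ℝ≥0∞) (s : Set X) :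
    ∫⁻ y in f '' s, g y ∂μH[d] ≤ (K : ℝ≥0∞) ^ d * ∫⁻ x in s, g (f x) ∂μH[d] := by
  have hfm : Measurable f := hf.continuous.measurable
  have hμ : (μH[d]).restrict (f '' s) ≤ (K : ℝ≥0∞) ^ d • ((μH[d]).restrict s).map f := by
    refine Measure.le_iff.2 fun A hA => ?_
    rw [Measure.restrict_apply hA, Measure.smul_apply, Measure.map_apply hfm hA,
      Measure.restrict_apply (hfm hA), inter_comm _ (f '' s), inter_comm _ s,
      ← image_inter_preimage]
    exact hf.hausdorffMeasure_image_le hd _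
  calc ∫⁻ y in f '' s, g y ∂μH[d]
      ≤ ∫⁻ y, g y ∂((K : ℝ≥0∞) ^ d • ((μH[d]).restrict s).map f) := lintegral_mono' hμ le_rfl
    _ = (K : ℝ≥0∞) ^ d * ∫⁻ y, g y ∂((μH[d]).restrict s).map f := lintegral_smul_measure _ _
    _ ≤ (K : ℝ≥0∞) ^ d * ∫⁻ x in s, g (f x) ∂μH[d] := by gcongr; exact lintegral_map_le g f

lemma locallyIntegrable_norm_rpow {F : Type*} [NormedAddCommGroup F] [NormedSpace ℝ F]
    [FiniteDimensional ℝ F] [MeasurableSpace F] [BorelSpace F] (μ : Measure F)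
    [μ.IsAddHaarMeasure] {q : ℝ} (hq : -(finrank ℝ F : ℝ) < q) :
    LocallyIntegrable (fun x : F => ‖x‖ ^ q) μ := by
  rcases subsingleton_or_nontrivial F with hF | hF
  · simpa only [Subsingleton.elim _ (0 : F)] using locallyIntegrable_const (‖(0 : F)‖ ^ q)
  intro x
  refine ⟨ball 0 (‖x‖ + 1), isOpen_ball.mem_nhds (by simp), ?_⟩
  rw [integrableOn_fun_norm_addHaar μ (f := fun t : ℝ => t ^ q)]
  have hradial : IntegrableOn (fun t : ℝ => t ^ (finrank ℝ F - 1 + q)) (Ioo 0 (‖x‖ + 1)) :=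
    (intervalIntegral.integrableOn_Ioo_rpow_iff (by positivity)).2 (by linarith)
  refine hradial.congr_fun (fun t ht => ?_) measurableSet_Ioo
  change t ^ ((finrank ℝ F : ℝ) - 1 + q) = _
  rw [Real.rpow_add ht.1, ← Nat.cast_pred finrank_pos, Real.rpow_natCast, smul_eq_mul]

lemma setLIntegral_sphere_le_mul_setLIntegral_unitSphere {E : Type*} [NormedAddCommGroup E]
    [NormedSpace ℝ E] [MeasurableSpace E] [BorelSpace E] {d R : ℝ} (hd : 0 ≤ d) (hR : 0 < R)
    (g : E → ℝ≥0∞) :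
    ∫⁻ x in sphere (0 : E) R, g x ∂μH[d] ≤
      ENNReal.ofReal (R ^ d) * ∫⁻ x in sphere (0 : E) 1, g (R • x) ∂μH[d] := by
  have hsphere : (R • ·) '' sphere (0 : E) 1 = sphere 0 R := by
    rw [image_smul, smul_sphere' hR.ne', smul_zero, mul_one, Real.norm_of_nonneg hR.le]
  rw [← hsphere, ← ENNReal.ofReal_rpow_of_pos hR, ← Real.enorm_of_nonneg hR.le]
  exact setLIntegral_image_hausdorffMeasure_le (lipschitzWith_smul R) hd g _

section Stereographic

variable {E : Type*} [NormedAddCommGroup E] [InnerProductSpace ℝ E] {v : E}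

lemma norm_stereoInvFun_sub_sq (hv : ‖v‖ = 1) (w z : (ℝ ∙ v)ᗮ) :
    ‖(stereoInvFun hv w - stereoInvFun hv z : E)‖ ^ 2 =
      16 * ‖w - z‖ ^ 2 / ((‖w‖ ^ 2 + 4) * (‖z‖ ^ 2 + 4)) := by
  have hwv : ⟪(w : E), v⟫ = 0 := Submodule.mem_orthogonal_singleton_iff_inner_left.1 w.2
  have hvz : ⟪v, (z : E)⟫ = 0 := Submodule.mem_orthogonal_singleton_iff_inner_right.1 z.2
  have hinner : ⟪(stereoInvFun hv w : E), stereoInvFun hv z⟫ =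
      (16 * ⟪(w : E), z⟫ + (‖w‖ ^ 2 - 4) * (‖z‖ ^ 2 - 4)) /
        ((‖w‖ ^ 2 + 4) * (‖z‖ ^ 2 + 4)) := by
    simp only [stereoInvFun_apply, inner_smul_left, inner_smul_right, inner_add_left,
      inner_add_right, hwv, hvz, real_inner_self_eq_norm_sq, hv, RCLike.conj_to_real]
    field_simp
    ring
  rw [norm_sub_sq_real, norm_eq_of_mem_sphere, norm_eq_of_mem_sphere, hinner,
    norm_sub_sq_real, Submodule.coe_inner]
  field_simp
  ring

lemma lipschitzWith_one_stereoInvFun (hv : ‖v‖ = 1) : LipschitzWith 1 (stereoInvFun hv) := by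
  refine LipschitzWith.mk_one fun w z => ?_
  rw [Subtype.dist_eq, dist_eq_norm, dist_eq_norm, ← sq_le_sq₀ (norm_nonneg _) (norm_nonneg _),
    norm_stereoInvFun_sub_sq, div_le_iff₀ (by positivity), mul_comm]
  gcongr
  nlinarith [sq_nonneg ‖w‖, sq_nonneg ‖z‖]

lemma norm_starProjection_orthogonal_stereoInvFun (hv : ‖v‖ = 1) (w : (ℝ ∙ v)ᗮ) :
    ‖(ℝ ∙ v)ᗮ.starProjection (stereoInvFun hv w)‖ = ‖w‖ * (4 / (‖w‖ ^ 2 + 4)) := by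
  have hproj : (ℝ ∙ v)ᗮ.starProjection (stereoInvFun hv w) = (4 / (‖w‖ ^ 2 + 4)) • (w : E) := by
    have hv₀ : (ℝ ∙ v)ᗮ.starProjection v = 0 :=
      Submodule.starProjection_orthogonal_apply_eq_zero (Submodule.mem_span_singleton_self v)
    rw [stereoInvFun_apply, map_smul, map_add, map_smul, map_smul, hv₀, smul_zero, add_zero,
      Submodule.starProjection_eq_self_iff.2 w.2, smul_smul, div_eq_inv_mul]
  rw [hproj, norm_smul, Real.norm_of_nonneg (by positivity), mul_comm, Submodule.coe_norm]

lemma norm_starProjection_orthogonal_stereoInvFun_rpow_le (hv : ‖v‖ = 1) {w : (ℝ ∙ v)ᗮ}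
    (hw : ‖w‖ ≤ 2) (q : ℝ) :
    ‖(ℝ ∙ v)ᗮ.starProjection (stereoInvFun hv w)‖ ^ q ≤ 2 ^ |q| * ‖w‖ ^ q := by
  rw [norm_starProjection_orthogonal_stereoInvFun, Real.mul_rpow (norm_nonneg _) (by positivity),
    mul_comm]
  gcongr
  have hpos : 0 < 4 / (‖w‖ ^ 2 + 4) := by positivity
  have hle_one : 4 / (‖w‖ ^ 2 + 4) ≤ 1 := (div_le_one (by positivity)).2 (by nlinarith)
  have hinv_le : (4 / (‖w‖ ^ 2 + 4))⁻¹ ≤ 2 := by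
    rw [inv_div]
    nlinarith [norm_nonneg w]
  calc (4 / (‖w‖ ^ 2 + 4)) ^ q
      ≤ (4 / (‖w‖ ^ 2 + 4)) ^ (-|q|) :=
        Real.rpow_le_rpow_of_exponent_ge hpos hle_one (neg_abs_le q)
    _ = (4 / (‖w‖ ^ 2 + 4))⁻¹ ^ |q| := by rw [Real.rpow_neg hpos.le, Real.inv_rpow hpos.le]
    _ ≤ 2 ^ |q| := by gcongr

lemma hemisphere_subset_image_stereoInvFun (hv : ‖v‖ = 1) :
    sphere (0 : E) 1 ∩ {x | ⟪v, x⟫ ≤ 0} ⊆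
      (fun w => (stereoInvFun hv w : E)) '' closedBall (0 : (ℝ ∙ v)ᗮ) 2 := by
  rintro x ⟨hx, hxv : ⟪v, x⟫ ≤ 0⟩
  have hne : x ≠ v := by
    rintro rfl
    rw [real_inner_self_eq_norm_sq, hv] at hxv
    norm_num at hxv
  refine ⟨stereoToFun v x, ?_, congrArg Subtype.val (stereo_left_inv hv (x := ⟨x, hx⟩) hne)⟩
  have hcoeff : 2 / (1 - ⟪v, x⟫) ≤ 2 := div_le_self (by norm_num) (by linarith)
  have hproj : ‖(ℝ ∙ v)ᗮ.orthogonalProjectionOnto x‖ ≤ 1 :=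
    ((ℝ ∙ v)ᗮ.norm_orthogonalProjectionOnto_apply_le x).trans_eq (mem_sphere_zero_iff_norm.1 hx)
  have hcoeff₀ : 0 ≤ 2 / (1 - ⟪v, x⟫) := div_nonneg (by norm_num) (by linarith)
  rw [mem_closedBall_zero_iff, stereoToFun_apply, norm_smul, innerSL_apply_apply,
    Real.norm_of_nonneg hcoeff₀]
  linarith [mul_le_mul hcoeff hproj (norm_nonneg _) zero_le_two]

variable [MeasurableSpace E] [BorelSpace E] {n : ℕ} [Fact (finrank ℝ E = n + 1)] {q : ℝ}

lemma setLIntegral_hemisphere_norm_starProjection_rpow_lt_top (hv : ‖v‖ = 1)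
    (hq : -(n : ℝ) < q) :
    ∫⁻ x in sphere (0 : E) 1 ∩ {x | ⟪v, x⟫ ≤ 0},
      ENNReal.ofReal (‖(ℝ ∙ v)ᗮ.starProjection x‖ ^ q) ∂μH[n] < ∞ := by
  have : FiniteDimensional ℝ E := .of_fact_finrank_eq_succ n
  have hdim : finrank ℝ (ℝ ∙ v)ᗮ = n :=
    Submodule.finrank_orthogonal_span_singleton (norm_ne_zero_iff.1 (by simp [hv]))
  have : (μH[n] : Measure (ℝ ∙ v)ᗮ).IsAddHaarMeasure := by rw [← hdim]; infer_instance
  have hint : IntegrableOn (fun w : (ℝ ∙ v)ᗮ => 2 ^ |q| * ‖w‖ ^ q) (closedBall 0 2) μH[n] :=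
    ((locallyIntegrable_norm_rpow _ (by rwa [hdim])).integrableOn_isCompact
      (isCompact_closedBall _ _)).const_mul _
  calc ∫⁻ x in sphere (0 : E) 1 ∩ {x | ⟪v, x⟫ ≤ 0},
        ENNReal.ofReal (‖(ℝ ∙ v)ᗮ.starProjection x‖ ^ q) ∂μH[n]
      ≤ ∫⁻ x in (fun w => (stereoInvFun hv w : E)) '' closedBall 0 2,
          ENNReal.ofReal (‖(ℝ ∙ v)ᗮ.starProjection x‖ ^ q) ∂μH[n] :=
        lintegral_mono_set (hemisphere_subset_image_stereoInvFun hv)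
    _ ≤ ∫⁻ w in closedBall 0 2,
          ENNReal.ofReal (‖(ℝ ∙ v)ᗮ.starProjection (stereoInvFun hv w)‖ ^ q) ∂μH[n] := by
        simpa only [mul_one, NNReal.coe_one, ENNReal.coe_one, ENNReal.one_rpow, one_mul] using!
          setLIntegral_image_hausdorffMeasure_le
            ((LipschitzWith.subtype_val _).comp (lipschitzWith_one_stereoInvFun hv)) n.cast_nonneg
            (fun x => ENNReal.ofReal (‖(ℝ ∙ v)ᗮ.starProjection x‖ ^ q)) (closedBall 0 2)
    _ ≤ ∫⁻ w : (ℝ ∙ v)ᗮ in closedBall 0 2, ENNReal.ofReal (2 ^ |q| * ‖w‖ ^ q) ∂μH[n] :=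
        setLIntegral_mono' measurableSet_closedBall fun w hw => ENNReal.ofReal_le_ofReal <|
          norm_starProjection_orthogonal_stereoInvFun_rpow_le hv (mem_closedBall_zero_iff.1 hw) q
    _ < ∞ := hint.lintegral_lt_top

lemma setLIntegral_unitSphere_norm_starProjection_rpow_lt_top (hv : ‖v‖ = 1)
    (hq : -(n : ℝ) < q) :
    ∫⁻ x in sphere (0 : E) 1, ENNReal.ofReal (‖(ℝ ∙ v)ᗮ.starProjection x‖ ^ q) ∂μH[n] < ∞ := by
  have hcover : sphere (0 : E) 1 ⊆
      (sphere 0 1 ∩ {x | ⟪v, x⟫ ≤ 0}) ∪ (sphere 0 1 ∩ {x | ⟪-v, x⟫ ≤ 0}) := by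
    intro x hx
    simpa [inner_neg_left, mem_sphere_zero_iff_norm.1 hx] using le_total ⟪v, x⟫ 0
  have hspan : (ℝ ∙ (-v)) = ℝ ∙ v := by rw [← Set.neg_singleton, Submodule.span_neg]
  have hneg := setLIntegral_hemisphere_norm_starProjection_rpow_lt_top
    (v := -v) (by rwa [norm_neg]) hq
  simp only [hspan] at hneg
  exact (lintegral_mono_set hcover).trans_lt <| (lintegral_union_le _ _ _).trans_lt <|
    ENNReal.add_lt_top.2 ⟨setLIntegral_hemisphere_norm_starProjection_rpow_lt_top hv hq, hneg⟩

theorem sphere_integral_bound_general (hv : ‖v‖ = 1) (hq : -(n : ℝ) < q) :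
    ∃ C : ℝ, 0 < C ∧ ∀ R : ℝ, 0 < R →
      ∫⁻ x in sphere (0 : E) R, ENNReal.ofReal (‖(ℝ ∙ v)ᗮ.starProjection x‖ ^ q) ∂μH[n]
        ≤ ENNReal.ofReal (C * R ^ (n + q)) := by
  set I := ∫⁻ x in sphere (0 : E) 1, ENNReal.ofReal (‖(ℝ ∙ v)ᗮ.starProjection x‖ ^ q) ∂μH[n]
  have hI : I ≠ ∞ := (setLIntegral_unitSphere_norm_starProjection_rpow_lt_top hv hq).ne
  refine ⟨I.toReal + 1, by positivity, fun R hR => ?_⟩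
  have hhom (x : E) : ENNReal.ofReal (‖(ℝ ∙ v)ᗮ.starProjection (R • x)‖ ^ q) =
      ENNReal.ofReal (R ^ q) * ENNReal.ofReal (‖(ℝ ∙ v)ᗮ.starProjection x‖ ^ q) := by
    rw [map_smul, norm_smul, Real.norm_of_nonneg hR.le, Real.mul_rpow hR.le (norm_nonneg _),
      ENNReal.ofReal_mul (by positivity)]
  calc ∫⁻ x in sphere (0 : E) R, ENNReal.ofReal (‖(ℝ ∙ v)ᗮ.starProjection x‖ ^ q) ∂μH[n]
      ≤ ENNReal.ofReal (R ^ (n : ℝ)) * ∫⁻ x in sphere (0 : E) 1,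
          ENNReal.ofReal (‖(ℝ ∙ v)ᗮ.starProjection (R • x)‖ ^ q) ∂μH[n] :=
        setLIntegral_sphere_le_mul_setLIntegral_unitSphere n.cast_nonneg hR _
    _ = ENNReal.ofReal (R ^ (n : ℝ)) * (ENNReal.ofReal (R ^ q) * I) := by
        simp only [hhom, lintegral_const_mul' _ _ ENNReal.ofReal_ne_top, I]
    _ = ENNReal.ofReal (I.toReal * R ^ (n + q)) := by
        rw [mul_comm I.toReal, Real.rpow_add hR, ENNReal.ofReal_mul (by positivity),
          ENNReal.ofReal_mul (by positivity), ENNReal.ofReal_toReal hI, mul_assoc]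
    _ ≤ ENNReal.ofReal ((I.toReal + 1) * R ^ (n + q)) := by
        gcongr
        exact le_add_of_nonneg_right zero_le_one

end Stereographic

lemma norm_starProjection_orthogonal_single_sq {ι : Type*} [Fintype ι] [DecidableEq ι] (i : ι)
    (w : EuclideanSpace ℝ ι) :
    ‖(ℝ ∙ EuclideanSpace.single i (1 : ℝ))ᗮ.starProjection w‖ ^ 2 =
      ∑ j ∈ Finset.univ.erase i, w j ^ 2 := by
  have hpyth := (ℝ ∙ EuclideanSpace.single i (1 : ℝ)).norm_sq_eq_add_norm_sq_starProjection w
  rw [Submodule.starProjection_unit_singleton ℝ (by simp), EuclideanSpace.inner_single_left,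
    norm_smul, PiLp.norm_single, EuclideanSpace.real_norm_sq_eq,
    ← Finset.add_sum_erase _ _ (Finset.mem_univ i)] at hpyth
  simpa only [map_one, one_mul, norm_one, mul_one, Real.norm_eq_abs, sq_abs, add_right_inj,
    eq_comm] using hpyth

/-- There is a constant `C > 0` such that for every `R > 0`, the integral over the sphere
of radius `R` in `ℝ⁵` of `1/(w₂² + w₃² + w₄² + w₅²)` (the inverse square of the distance
to the `w₁`-axis), with respect to the 4-dimensional Hausdorff (surface) measure, is at
most `C·R²`. -/
theorem sphere_integral_bound :
    ∃ C : ℝ, 0 < C ∧ ∀ R : ℝ, 0 < R →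
      ∫⁻ w in Metric.sphere (0 : EuclideanSpace ℝ (Fin 5)) R,
          ENNReal.ofReal (((w 1) ^ 2 + (w 2) ^ 2 + (w 3) ^ 2 + (w 4) ^ 2)⁻¹)
          ∂ μH[4]
        ≤ ENNReal.ofReal (C * R ^ 2) := by
  have : Fact (finrank ℝ (EuclideanSpace ℝ (Fin 5)) = 4 + 1) := ⟨finrank_euclideanSpace_fin⟩
  obtain ⟨C, hC, hbound⟩ := sphere_integral_bound_general (n := 4) (q := -2)
    (v := EuclideanSpace.single (0 : Fin 5) (1 : ℝ)) (by simp) (by norm_num)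
  have hdist (w : EuclideanSpace ℝ (Fin 5)) :
      ‖(ℝ ∙ EuclideanSpace.single (0 : Fin 5) (1 : ℝ))ᗮ.starProjection w‖ ^ (-2 : ℝ) =
        (w 1 ^ 2 + w 2 ^ 2 + w 3 ^ 2 + w 4 ^ 2)⁻¹ := by
    rw [Real.rpow_neg (norm_nonneg _), Real.rpow_two, norm_starProjection_orthogonal_single_sq,
      Finset.sum_erase_eq_sub (Finset.mem_univ _), Fin.sum_univ_five]
    ring
  have hexp : (4 : ℝ) + -2 = 2 := by norm_num
  refine ⟨C, hC, fun R hR => ?_⟩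
  simpa only [hdist, hexp, Real.rpow_two, Nat.cast_ofNat] using hbound R hR
end

section
/- Let f : ℝ⁵ → ℝ be a C² function that is harmonic on all of ℝ⁵ (i.e. ∑_{i=1}^{5} ∂²f/∂w_i² = 0 everywhere). Suppose there exists a constant C > 0 such that f(w) ≤ C·‖w‖/(w₂²+w₃²+w₄²+w₅²) for every w ∈ ℝ⁵ with w₂²+w₃²+w₄²+w₅² ≠ 0. Then f is constant. -/
/-- Second partial derivative of a function on `ℝ⁵` in the `i`-th coordinate direction. -/
noncomputable def pd2₅ (F : EuclideanSpace ℝ (Fin 5) → ℝ) (i : Fin 5)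
    (w : EuclideanSpace ℝ (Fin 5)) : ℝ :=
  fderiv ℝ (fun v => fderiv ℝ F v (EuclideanSpace.single i 1)) w (EuclideanSpace.single i 1)

/-!
For a continuous compactly supported radial weight `ρ (‖x - z‖²)`, the vector field
`ρ (‖x - z‖²) • (x - z)` is the gradient of a `C¹` bump, so Green's identity shows that a harmonic
`f` satisfies the mean value property against the weight. Comparing the weighted averages of a
nonnegative harmonic function about two centres and letting the radius tend to infinity (Nelson's
argument) gives Liouville's theorem for harmonic functions bounded above.

The majorant `‖w‖ ^ m / dist (w, K) ^ k` is locally integrable because `k` is less than the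
codimension of `K`, and it does not increase along rays because `m ≤ k`. Its averages over balls of
radius `R ≥ 1` about the origin are therefore at most its average over the unit ball, and since a
ball of radius `R` about a point `z` with `‖z‖ ≤ R` lies in the ball of radius `2 * R` about the
origin, the mean value property bounds `f z` uniformly in `z`.
-/

open MeasureTheory Metric Set Filter Module InnerProductSpace Function
open scoped Topology Laplacian Gradient EuclideanSpace

section NormedSpace

variable {E : Type*} [NormedAddCommGroup E] [NormedSpace ℝ E]

theorem fderiv_fderiv_apply_eq_iteratedFDeriv {f : E → ℝ} (hf : ContDiff ℝ 2 f) (v x : E) :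
    fderiv ℝ (fun y => fderiv ℝ f y v) x v = iteratedFDeriv ℝ 2 f x ![v, v] := by
  have hf' : DifferentiableAt ℝ (fderiv ℝ f) x :=
    (hf.fderiv_right (m := 1) le_rfl).differentiable one_ne_zero x
  rw [iteratedFDeriv_two_apply, fderiv_clm_apply hf' (differentiableAt_const v)]
  simp

theorem sub_eq_integral_fderiv_segment {f : E → ℝ} (hf : ContDiff ℝ 1 f) (z x : E) :
    f (z + x) - f z = ∫ t in (0 : ℝ)..1, fderiv ℝ f (z + t • x) x := by
  have hderiv (t : ℝ) : HasDerivAt (fun t : ℝ => f (z + t • x)) (fderiv ℝ f (z + t • x) x) t := by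
    have hline : HasDerivAt (fun t : ℝ => z + t • x) x t := by
      simpa using ((hasDerivAt_id t).smul_const x).const_add z
    exact (hf.differentiable one_ne_zero _).hasFDerivAt.comp_hasDerivAt t hline
  have hcont : Continuous fun t : ℝ => fderiv ℝ f (z + t • x) x :=
    ((hf.continuous_fderiv one_ne_zero).comp (by fun_prop)).clm_apply continuous_const
  rw [intervalIntegral.integral_eq_sub_of_hasDerivAt (fun t _ => hderiv t)
    (hcont.intervalIntegrable 0 1)]
  simp

end NormedSpace

theorem intervalIntegral_integral_swap_of_continuous {X : Type*} [TopologicalSpace X]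
    [T2Space X] [SecondCountableTopology X] [MeasurableSpace X] [OpensMeasurableSpace X]
    {μ : Measure X} [SFinite μ] [IsFiniteMeasureOnCompacts μ]
    {F : ℝ → X → ℝ} (hF : Continuous (uncurry F)) {k : Set X} (hk : IsCompact k)
    (hFk : ∀ t, ∀ x ∉ k, F t x = 0) (a b : ℝ) :
    ∫ t in a..b, ∫ x, F t x ∂μ = ∫ x, (∫ t in a..b, F t x) ∂μ := by
  refine intervalIntegral_integral_swap ?_
  have hcompact : IntegrableOn (uncurry F) (uIcc a b ×ˢ k) (volume.prod μ) :=
    hF.continuousOn.integrableOn_compact (isCompact_uIcc.prod hk)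
  rw [← Measure.restrict_univ (μ := μ), Measure.prod_restrict]
  exact hcompact.of_forall_sdiff_eq_zero (measurableSet_uIoc.prod .univ)
    fun p hp => hFk _ _ fun hpk => hp.2 ⟨uIoc_subset_uIcc hp.1.1, hpk⟩

theorem exists_contDiff_primitive_eq_zero {ρ : ℝ → ℝ} (hρ : Continuous ρ) {r : ℝ}
    (hr : ∀ s, r ≤ s → ρ s = 0) :
    ∃ η : ℝ → ℝ, ContDiff ℝ 1 η ∧ (∀ s, HasDerivAt η (ρ s) s) ∧ ∀ s, r ≤ s → η s = 0 := by
  have hderiv (s) : HasDerivAt (fun s => ∫ t in r..s, ρ t) (ρ s) s :=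
    (hρ.integral_hasStrictDerivAt r s).hasDerivAt
  refine ⟨fun s => ∫ t in r..s, ρ t, ?_, hderiv, fun s hs => ?_⟩
  · refine contDiff_one_iff_deriv.2 ⟨fun s => (hderiv s).differentiableAt, ?_⟩
    simpa only [funext fun s => (hderiv s).deriv] using hρ
  · refine intervalIntegral.integral_zero_ae (ae_of_all _ fun t ht => hr t ?_)
    rw [uIoc_of_le hs] at ht
    exact ht.1.le

theorem hasCompactSupport_comp_norm_sub_sq {E : Type*} [NormedAddCommGroup E] [ProperSpace E]
    {η : ℝ → ℝ} {r : ℝ} (hη : ∀ s, r ≤ s → η s = 0) (z : E) :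
    HasCompactSupport (fun x : E => η (‖x - z‖ ^ 2)) := by
  refine .intro (isCompact_closedBall z √r) fun x hx => hη _ ?_
  rw [mem_closedBall, dist_eq_norm, not_le] at hx
  exact (Real.sqrt_le_left (norm_nonneg _)).1 hx.le

theorem hasGradientAt_comp_norm_sub_sq {E : Type*} [NormedAddCommGroup E] [InnerProductSpace ℝ E]
    [CompleteSpace E] {η : ℝ → ℝ} {η' : ℝ} (z x : E) (hη : HasDerivAt η η' (‖x - z‖ ^ 2)) :
    HasGradientAt (fun y => η (‖y - z‖ ^ 2)) ((2 * η') • (x - z)) x := by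
  have hnorm : HasFDerivAt (fun y => ‖y - z‖ ^ 2) (2 • innerSL ℝ (x - z)) x := by
    simpa using ((hasFDerivAt_id x).sub_const z).norm_sq
  have hgrad : toDual ℝ E ((2 * η') • (x - z)) = η' • 2 • innerSL ℝ (x - z) := by
    ext v
    simp [mul_left_comm, mul_comm]
  rw [hasGradientAt_iff_hasFDerivAt, hgrad]
  exact hη.comp_hasFDerivAt x hnorm

section MeanValue

variable {E : Type*} [NormedAddCommGroup E] [InnerProductSpace ℝ E] [FiniteDimensional ℝ E]

theorem contDiff_two_of_harmonicOnNhd {f : E → ℝ} (hf : HarmonicOnNhd f univ) :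
    ContDiff ℝ 2 f :=
  contDiffOn_univ.1 hf.contDiffOn

variable [MeasurableSpace E] [BorelSpace E]

theorem integral_inner_gradient_eq_neg_integral_laplacian_mul {u ψ : E → ℝ}
    (hu : ContDiff ℝ 2 u) (hψ : ContDiff ℝ 1 ψ) (hψc : HasCompactSupport ψ) :
    ∫ x, inner ℝ (∇ u x) (∇ ψ x) = -∫ x, Δ u x * ψ x := by
  let b := stdOrthonormalBasis ℝ E
  have hu' (i) : ContDiff ℝ 1 (fun x => fderiv ℝ u x (b i)) :=
    (hu.fderiv_right (m := 1) le_rfl).clm_apply contDiff_const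
  have hu'' (i) : Continuous (fun x => fderiv ℝ (fun y => fderiv ℝ u y (b i)) x (b i)) :=
    ((hu' i).continuous_fderiv one_ne_zero).clm_apply continuous_const
  have hψ' (i) : Continuous (fun x => fderiv ℝ ψ x (b i)) :=
    (hψ.continuous_fderiv one_ne_zero).clm_apply continuous_const
  have hint (i) : Integrable (fun x => fderiv ℝ u x (b i) * fderiv ℝ ψ x (b i)) :=
    ((hu' i).continuous.mul (hψ' i)).integrable_of_hasCompactSupport
      ((hψc.fderiv_apply ℝ (b i)).mul_left)
  have hint' (i) :
      Integrable (fun x => fderiv ℝ (fun y => fderiv ℝ u y (b i)) x (b i) * ψ x) :=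
    ((hu'' i).mul hψ.continuous).integrable_of_hasCompactSupport hψc.mul_left
  have hparts (i) : ∫ x, fderiv ℝ u x (b i) * fderiv ℝ ψ x (b i) =
      -∫ x, fderiv ℝ (fun y => fderiv ℝ u y (b i)) x (b i) * ψ x :=
    integral_mul_fderiv_eq_neg_fderiv_mul_of_integrable (hint' i) (hint i)
      (((hu' i).continuous.mul hψ.continuous).integrable_of_hasCompactSupport hψc.mul_left)
      (fun x _ => (hu' i).differentiable one_ne_zero x)
      (fun x _ => hψ.differentiable one_ne_zero x)
  calc ∫ x, inner ℝ (∇ u x) (∇ ψ x)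
      = ∫ x, ∑ i, fderiv ℝ u x (b i) * fderiv ℝ ψ x (b i) := by
        congr with x
        rw [← b.sum_inner_mul_inner]
        simp only [inner_gradient_left, inner_gradient_right, conj_trivial]
    _ = -∫ x, ∑ i, fderiv ℝ (fun y => fderiv ℝ u y (b i)) x (b i) * ψ x := by
        rw [integral_finsetSum _ fun i _ => hint i, integral_finsetSum _ fun i _ => hint' i,
          ← Finset.sum_neg_distrib]
        exact Finset.sum_congr rfl fun i _ => hparts i
    _ = -∫ x, Δ u x * ψ x := by
        simp only [fderiv_fderiv_apply_eq_iteratedFDeriv hu,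
          laplacian_eq_iteratedFDeriv_orthonormalBasis u b, Finset.sum_mul]

variable {f : E → ℝ} {ρ : ℝ → ℝ} {r : ℝ}

theorem integral_fderiv_apply_mul_radial_eq_zero (hf : HarmonicOnNhd f univ)
    (hρ : Continuous ρ) (hr : ∀ s, r ≤ s → ρ s = 0) (z : E) :
    ∫ x, fderiv ℝ f (z + x) x * ρ (‖x‖ ^ 2) = 0 := by
  obtain ⟨η, hη, hη', hηr⟩ := exists_contDiff_primitive_eq_zero hρ hr
  have hgrad (x : E) : ∇ (fun y => η (‖y - z‖ ^ 2)) x = (2 * ρ (‖x - z‖ ^ 2)) • (x - z) :=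
    (hasGradientAt_comp_norm_sub_sq z x (hη' _)).gradient
  have hgreen : ∫ x, inner ℝ (∇ f x) (∇ (fun y => η (‖y - z‖ ^ 2)) x) = 0 := by
    have hψ : ContDiff ℝ 1 fun y => η (‖y - z‖ ^ 2) :=
      hη.comp ((contDiff_id.sub contDiff_const).norm_sq ℝ)
    rw [integral_inner_gradient_eq_neg_integral_laplacian_mul (contDiff_two_of_harmonicOnNhd hf)
      hψ (hasCompactSupport_comp_norm_sub_sq hηr z)]
    simp [(hf _ (mem_univ _)).2.eq_of_nhds]
  have hshift : ∫ x, inner ℝ (∇ f x) (∇ (fun y => η (‖y - z‖ ^ 2)) x) =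
      2 * ∫ x, fderiv ℝ f (z + x) x * ρ (‖x‖ ^ 2) := by
    rw [← integral_add_left_eq_self _ z, ← integral_const_mul]
    congr with x
    rw [hgrad, inner_gradient_left, add_sub_cancel_left, map_smul, smul_eq_mul]
    ring
  linarith

theorem integral_fderiv_segment_mul_radial_eq_zero (hf : HarmonicOnNhd f univ)
    (hρ : Continuous ρ) (hr : ∀ s, r ≤ s → ρ s = 0) (z : E) {t : ℝ} (ht : 0 < t) :
    ∫ x, fderiv ℝ f (z + t • x) x * ρ (‖x‖ ^ 2) = 0 := by
  have hscaled := integral_fderiv_apply_mul_radial_eq_zero hf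
    (ρ := fun s => t⁻¹ * ρ (s / t ^ 2)) (r := r * t ^ 2) (by fun_prop)
    (fun s hs => by rw [hr _ ((le_div_iff₀ (by positivity)).2 hs), mul_zero]) z
  rw [← smul_zero (t ^ finrank ℝ E)⁻¹, ← hscaled,
    ← Measure.integral_comp_smul_of_nonneg _ _ _ (hR := ht.le)]
  congr with x
  have hnorm : ‖t • x‖ ^ 2 / t ^ 2 = ‖x‖ ^ 2 := by
    rw [norm_smul, mul_pow, Real.norm_eq_abs, sq_abs]
    field_simp
  rw [hnorm, map_smul, smul_eq_mul]
  field_simp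

theorem integral_harmonic_mul_radial (hf : HarmonicOnNhd f univ) (hρ : Continuous ρ)
    (hr : ∀ s, r ≤ s → ρ s = 0) (z : E) :
    ∫ x, f (z + x) * ρ (‖x‖ ^ 2) = f z * ∫ x : E, ρ (‖x‖ ^ 2) := by
  have hf₂ : ContDiff ℝ 2 f := contDiff_two_of_harmonicOnNhd hf
  have hsupp : HasCompactSupport fun x : E => ρ (‖x‖ ^ 2) := by
    simpa using hasCompactSupport_comp_norm_sub_sq hr (0 : E)
  have hint : Integrable (fun x : E => ρ (‖x‖ ^ 2)) :=
    Continuous.integrable_of_hasCompactSupport (by fun_prop) hsupp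
  have hint' : Integrable (fun x : E => f (z + x) * ρ (‖x‖ ^ 2)) :=
    Continuous.integrable_of_hasCompactSupport (by fun_prop) hsupp.mul_left
  have hcont : Continuous
      (uncurry fun (t : ℝ) (x : E) => fderiv ℝ f (z + t • x) x * ρ (‖x‖ ^ 2)) := by
    have := hf₂.continuous_fderiv two_ne_zero
    fun_prop
  rw [← sub_eq_zero, ← integral_const_mul, ← integral_sub hint' (hint.const_mul _)]
  calc ∫ x, (f (z + x) * ρ (‖x‖ ^ 2) - f z * ρ (‖x‖ ^ 2))
      = ∫ x, ∫ t in (0 : ℝ)..1, fderiv ℝ f (z + t • x) x * ρ (‖x‖ ^ 2) := by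
        congr with x
        rw [← sub_mul, sub_eq_integral_fderiv_segment (hf₂.of_le one_le_two),
          intervalIntegral.integral_mul_const]
    _ = ∫ t in (0 : ℝ)..1, ∫ x, fderiv ℝ f (z + t • x) x * ρ (‖x‖ ^ 2) :=
        (intervalIntegral_integral_swap_of_continuous hcont hsupp.isCompact
          (fun t x hx => by rw [image_eq_zero_of_notMem_tsupport hx, mul_zero]) 0 1).symm
    _ = 0 := by
        rw [intervalIntegral.integral_of_le zero_le_one]
        refine setIntegral_eq_zero_of_forall_eq_zero fun t ht => ?_
        exact integral_fderiv_segment_mul_radial_eq_zero hf hρ hr z ht.1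

end MeanValue

/-- The truncated paraboloid `(R² - ‖x‖²)⁺`, a weight on the ball of radius `R` about the origin.
It stands in for the indicator function of that ball in the mean value property; being a continuous
function of `‖x‖²`, it needs neither surface measure nor approximation. -/
noncomputable def ballWeight {E : Type*} [NormedAddCommGroup E] (R : ℝ) (x : E) : ℝ :=
  max 0 (R ^ 2 - ‖x‖ ^ 2)

section BallWeight

variable {E : Type*} [NormedAddCommGroup E] {R : ℝ}

theorem ballWeight_nonneg (R : ℝ) (x : E) : 0 ≤ ballWeight R x :=
  le_max_left _ _

theorem ballWeight_le_sq (R : ℝ) (x : E) : ballWeight R x ≤ R ^ 2 :=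
  max_le (sq_nonneg R) (sub_le_self _ (sq_nonneg _))

theorem ballWeight_eq_zero (hR : 0 ≤ R) {x : E} (hx : R ≤ ‖x‖) : ballWeight R x = 0 :=
  max_eq_left (sub_nonpos.2 (pow_le_pow_left₀ hR hx 2))

theorem ballWeight_le_ballWeight_add (hR : 0 ≤ R) (x a : E) :
    ballWeight R x ≤ ballWeight (R + ‖a‖) (x + a) := by
  rcases le_or_gt R ‖x‖ with hx | hx
  · exact (ballWeight_eq_zero hR hx).trans_le (ballWeight_nonneg _ _)
  · refine max_le_max_left 0 ?_
    nlinarith [norm_add_le x a, norm_nonneg x, norm_nonneg a, norm_nonneg (x + a)]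

theorem ballWeight_sub_le_indicator {z : E} (hz : ‖z‖ ≤ R) (y : E) :
    ballWeight R (y - z) ≤ (closedBall 0 (2 * R)).indicator (fun _ => R ^ 2) y := by
  by_cases hy : y ∈ closedBall 0 (2 * R)
  · exact (ballWeight_le_sq R _).trans_eq (indicator_of_mem hy fun _ => R ^ 2).symm
  · rw [indicator_of_notMem hy]
    rw [mem_closedBall_zero_iff, not_le] at hy
    exact (ballWeight_eq_zero ((norm_nonneg z).trans hz)
      (by linarith [norm_sub_norm_le y z])).le

theorem ballWeight_smul [NormedSpace ℝ E] (R : ℝ) (x : E) :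
    ballWeight R (R • x) = R ^ 2 * ballWeight 1 x := by
  rw [ballWeight, ballWeight, mul_max_of_nonneg _ _ (sq_nonneg R), norm_smul, mul_pow,
    Real.norm_eq_abs, sq_abs]
  ring_nf

@[fun_prop]
theorem continuous_ballWeight (R : ℝ) : Continuous (ballWeight R : E → ℝ) := by
  unfold ballWeight
  fun_prop

theorem hasCompactSupport_ballWeight [ProperSpace E] (hR : 0 ≤ R) :
    HasCompactSupport (ballWeight R : E → ℝ) :=
  .intro (isCompact_closedBall 0 R) fun x hx =>
    ballWeight_eq_zero hR (by simpa using (lt_of_not_ge (mt mem_closedBall_zero_iff.2 hx)).le)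

theorem integral_ballWeight [InnerProductSpace ℝ E] [FiniteDimensional ℝ E]
    [MeasurableSpace E] [BorelSpace E] (hR : 0 < R) :
    ∫ x : E, ballWeight R x = R ^ (finrank ℝ E + 2) * ∫ x : E, ballWeight 1 x := by
  have h := Measure.integral_comp_smul_of_nonneg volume (ballWeight R : E → ℝ) R (hR := hR.le)
  simp only [ballWeight_smul, integral_const_mul, smul_eq_mul] at h
  rw [pow_add, mul_assoc, h, mul_inv_cancel_left₀ (by positivity)]

theorem integral_ballWeight_pos [ProperSpace E] [MeasurableSpace E] [BorelSpace E]
    {μ : Measure E} [μ.IsOpenPosMeasure] [IsFiniteMeasureOnCompacts μ] (hR : 0 < R) :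
    0 < ∫ x, ballWeight R x ∂μ :=
  (continuous_ballWeight R).integral_pos_of_hasCompactSupport_nonneg_nonzero (x := 0)
    (hasCompactSupport_ballWeight hR.le) (ballWeight_nonneg R) (by simp [ballWeight, hR.ne'])

end BallWeight

section Liouville

variable {E : Type*} [NormedAddCommGroup E] [InnerProductSpace ℝ E] [FiniteDimensional ℝ E]

section Measure

variable [MeasurableSpace E] [BorelSpace E]

theorem integrable_mul_ballWeight {u : E → ℝ} (hu : Continuous u) {R : ℝ} (hR : 0 ≤ R) (z : E) :
    Integrable fun x => u (z + x) * ballWeight R x :=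
  Continuous.integrable_of_hasCompactSupport (by fun_prop)
    (hasCompactSupport_ballWeight hR).mul_left

theorem integral_harmonic_mul_ballWeight {f : E → ℝ} (hf : HarmonicOnNhd f univ) (R : ℝ) (z : E) :
    ∫ x, f (z + x) * ballWeight R x = f z * ∫ x : E, ballWeight R x :=
  integral_harmonic_mul_radial hf (ρ := fun s => max 0 (R ^ 2 - s)) (by fun_prop)
    (fun _ hs => max_eq_left (sub_nonpos.2 hs)) z

end Measure

theorem harmonic_le_harmonic_mul_pow {u : E → ℝ} (hu : HarmonicOnNhd u univ) (hu₀ : ∀ x, 0 ≤ u x)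
    {R : ℝ} (hR : 0 < R) (z z' : E) :
    u z ≤ u z' * (1 + ‖z - z'‖ / R) ^ (finrank ℝ E + 2) := by
  borelize E
  have hcont : Continuous u := (contDiff_two_of_harmonicOnNhd hu).continuous
  have hR' : 0 < R + ‖z - z'‖ := by positivity
  have hcompare : ∫ x, u (z + x) * ballWeight R x ≤
      ∫ x, u (z' + x) * ballWeight (R + ‖z - z'‖) x := by
    rw [← integral_add_right_eq_self (fun x => u (z' + x) * _) (z - z')]
    refine integral_mono (integrable_mul_ballWeight hcont hR.le z)
      ((integrable_mul_ballWeight hcont hR'.le z').comp_add_right (z - z')) fun x => ?_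
    have hpoint : z' + (x + (z - z')) = z + x := by abel
    dsimp only
    rw [hpoint]
    exact mul_le_mul_of_nonneg_left (ballWeight_le_ballWeight_add hR.le _ _) (hu₀ _)
  rw [integral_harmonic_mul_ballWeight hu, integral_harmonic_mul_ballWeight hu,
    integral_ballWeight hR, integral_ballWeight hR', ← mul_assoc, ← mul_assoc] at hcompare
  have hpow := le_of_mul_le_mul_right hcompare (integral_ballWeight_pos one_pos)
  rw [one_add_div hR.ne', div_pow, ← mul_div_assoc]
  exact (le_div_iff₀ (by positivity)).2 hpow

theorem harmonic_le_of_nonneg {u : E → ℝ} (hu : HarmonicOnNhd u univ) (hu₀ : ∀ x, 0 ≤ u x)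
    (z z' : E) : u z ≤ u z' := by
  have hlim : Tendsto (fun R : ℝ => u z' * (1 + ‖z - z'‖ / R) ^ (finrank ℝ E + 2)) atTop
      (𝓝 (u z' * (1 + 0) ^ (finrank ℝ E + 2))) :=
    (((tendsto_const_nhds.div_atTop tendsto_id).const_add 1).pow _).const_mul _
  rw [add_zero, one_pow, mul_one] at hlim
  exact ge_of_tendsto hlim <| (eventually_gt_atTop 0).mono fun R hR =>
    harmonic_le_harmonic_mul_pow hu hu₀ hR z z'

theorem harmonic_eq_const_of_bddAbove {f : E → ℝ} (hf : HarmonicOnNhd f univ)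
    (hbdd : BddAbove (range f)) : ∃ c, ∀ x, f x = c := by
  obtain ⟨M, hM⟩ := hbdd
  have hu : HarmonicOnNhd (fun x => M - f x) univ := (harmonicOnNhd_const M).sub hf
  have hu₀ (x) : 0 ≤ M - f x := sub_nonneg.2 (hM (mem_range_self x))
  refine ⟨f 0, fun x => le_antisymm ?_ ?_⟩
  · exact (sub_le_sub_iff_left M).1 (harmonic_le_of_nonneg hu hu₀ 0 x)
  · exact (sub_le_sub_iff_left M).1 (harmonic_le_of_nonneg hu hu₀ x 0)

variable [MeasurableSpace E] [BorelSpace E] {f g : E → ℝ}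

theorem setIntegral_closedBall_le_pow_mul (hg : LocallyIntegrable g)
    (hg₀ : ∀ x, 0 ≤ g x) (hray : ∀ t : ℝ, 1 ≤ t → ∀ x, g (t • x) ≤ g x) {R : ℝ} (hR : 1 ≤ R) :
    ∫ x in closedBall 0 R, g x ≤ R ^ finrank ℝ E * ∫ x in closedBall 0 1, g x := by
  have hR₀ : 0 < R := one_pos.trans_le hR
  have hscale : ∫ x in closedBall 0 1, g (R • x) =
      (R ^ finrank ℝ E)⁻¹ * ∫ x in closedBall 0 R, g x := by
    rw [Measure.setIntegral_comp_smul_of_pos _ _ _ hR₀, _root_.smul_closedBall _ _ zero_le_one,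
      smul_zero, Real.norm_of_nonneg hR₀.le, mul_one, smul_eq_mul]
  rw [← inv_mul_le_iff₀ (by positivity), ← hscale]
  exact integral_mono_of_nonneg (ae_of_all _ fun x => hg₀ _)
    (hg.integrableOn_isCompact (isCompact_closedBall 0 1)) (ae_of_all _ fun x => hray R hR x)

theorem harmonic_mul_integral_ballWeight_le (hf : HarmonicOnNhd f univ)
    (hg : LocallyIntegrable g) (hg₀ : ∀ x, 0 ≤ g x) (hfg : ∀ᵐ x, f x ≤ g x) {R : ℝ} {z : E}
    (hz : ‖z‖ ≤ R) :
    f z * ∫ x : E, ballWeight R x ≤ (∫ x in closedBall 0 (2 * R), g x) * R ^ 2 := by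
  have hle : ∀ᵐ y, f y * ballWeight R (y - z) ≤
      (closedBall 0 (2 * R)).indicator (fun y => g y * R ^ 2) y := by
    filter_upwards [hfg] with y hy
    rw [indicator_mul_right]
    exact mul_le_mul hy (ballWeight_sub_le_indicator hz y) (ballWeight_nonneg _ _) (hg₀ y)
  have hint : Integrable fun y => f y * ballWeight R (y - z) := by
    simpa using (integrable_mul_ballWeight (contDiff_two_of_harmonicOnNhd hf).continuous
      ((norm_nonneg z).trans hz) z).comp_sub_right z
  have hint' : IntegrableOn (fun y => g y * R ^ 2) (closedBall 0 (2 * R)) :=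
    (hg.integrableOn_isCompact (isCompact_closedBall 0 _)).mul_const _
  calc f z * ∫ x : E, ballWeight R x
      = ∫ x, f (z + x) * ballWeight R x := (integral_harmonic_mul_ballWeight hf R z).symm
    _ = ∫ y, f y * ballWeight R (y - z) := by
        simp only [← integral_add_left_eq_self (fun y => f y * ballWeight R (y - z)) z,
          add_sub_cancel_left]
    _ ≤ ∫ y in closedBall 0 (2 * R), g y * R ^ 2 := by
        rw [← integral_indicator measurableSet_closedBall]
        exact integral_mono_ae hint (hint'.integrable_indicator measurableSet_closedBall) hle
    _ = (∫ y in closedBall 0 (2 * R), g y) * R ^ 2 := integral_mul_const _ _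

theorem harmonic_bddAbove_of_ae_le (hf : HarmonicOnNhd f univ) (hg : LocallyIntegrable g)
    (hg₀ : ∀ x, 0 ≤ g x) (hray : ∀ t : ℝ, 1 ≤ t → ∀ x, g (t • x) ≤ g x)
    (hfg : ∀ᵐ x, f x ≤ g x) : BddAbove (range f) := by
  refine ⟨2 ^ finrank ℝ E * (∫ x in closedBall 0 1, g x) / ∫ x : E, ballWeight 1 x, ?_⟩
  rintro _ ⟨z, rfl⟩
  obtain ⟨R, hR, hz⟩ : ∃ R, 1 ≤ R ∧ ‖z‖ ≤ R := ⟨max 1 ‖z‖, le_max_left _ _, le_max_right _ _⟩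
  have hR₀ : 0 < R := one_pos.trans_le hR
  rw [le_div_iff₀ (integral_ballWeight_pos one_pos)]
  refine le_of_mul_le_mul_left ?_ (pow_pos hR₀ (finrank ℝ E + 2))
  calc R ^ (finrank ℝ E + 2) * (f z * ∫ x : E, ballWeight 1 x)
      = f z * ∫ x : E, ballWeight R x := by rw [integral_ballWeight hR₀, mul_left_comm]
    _ ≤ (∫ x in closedBall 0 (2 * R), g x) * R ^ 2 :=
        harmonic_mul_integral_ballWeight_le hf hg hg₀ hfg hz
    _ ≤ (2 * R) ^ finrank ℝ E * (∫ x in closedBall 0 1, g x) * R ^ 2 := by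
        gcongr
        exact setIntegral_closedBall_le_pow_mul hg hg₀ hray (by linarith)
    _ = R ^ (finrank ℝ E + 2) * (2 ^ finrank ℝ E * ∫ x in closedBall 0 1, g x) := by
        rw [mul_pow]
        ring

end Liouville

section LocallyIntegrable

theorem locallyIntegrable_comp_snd {X Y : Type*} [TopologicalSpace X] [MeasurableSpace X]
    [TopologicalSpace Y] [MeasurableSpace Y] {μ : Measure X} [SFinite μ] [IsLocallyFiniteMeasure μ]
    {ν : Measure Y} [SFinite ν] {g : Y → ℝ} (hg : LocallyIntegrable g ν) :
    LocallyIntegrable (fun p : X × Y => g p.2) (μ.prod ν) := by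
  rintro ⟨x, y⟩
  obtain ⟨s, hs, hμs⟩ := μ.finiteAt_nhds x
  obtain ⟨t, ht, hgt⟩ := hg y
  have : IsFiniteMeasure (μ.restrict s) := isFiniteMeasure_restrict.2 hμs.ne
  refine ⟨s ×ˢ t, prod_mem_nhds hs ht, ?_⟩
  rw [IntegrableOn, ← Measure.prod_restrict]
  exact hgt.integrable.comp_snd _

theorem locallyIntegrable_inv_norm_pow {F : Type*} [NormedAddCommGroup F] [NormedSpace ℝ F]
    [FiniteDimensional ℝ F] [MeasurableSpace F] [BorelSpace F] {μ : Measure F} [μ.IsAddHaarMeasure]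
    {k : ℕ} (hk : k < finrank ℝ F) : LocallyIntegrable (fun x : F => (‖x‖ ^ k)⁻¹) μ := by
  refine locallyIntegrable_of_norm_le_rpow (C := 1) (α := k) (by lia) (by exact_mod_cast hk)
    (ae_of_all _ fun x => ?_) (by fun_prop)
  rw [one_mul, Real.rpow_neg (norm_nonneg x), Real.rpow_natCast,
    Real.norm_of_nonneg (by positivity)]

variable {E : Type*} [NormedAddCommGroup E] [InnerProductSpace ℝ E]

theorem infDist_eq_norm_orthogonalProjectionOnto (K : Submodule ℝ E) [K.HasOrthogonalProjection]
    (w : E) : infDist w K = ‖Kᗮ.orthogonalProjectionOnto w‖ := by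
  rw [infDist_eq_iInf, Submodule.coe_norm, ← Submodule.starProjection_apply,
    Submodule.starProjection_orthogonal_val, Submodule.starProjection_minimal]
  simp only [dist_eq_norm]
  rfl

variable [FiniteDimensional ℝ E] [MeasurableSpace E] [BorelSpace E]

theorem locallyIntegrable_comp_orthogonalProjectionOnto (K : Submodule ℝ E) {g : Kᗮ → ℝ}
    (hg : LocallyIntegrable g) : LocallyIntegrable (g ∘ Kᗮ.orthogonalProjectionOnto) := by
  let e : E ≃ₜ K × Kᗮ :=
    K.orthogonalDecomposition.toHomeomorph.trans (WithLp.homeomorphProd 2 K Kᗮ)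
  have he : MeasurePreserving e :=
    (WithLp.volume_preserving_ofLp K Kᗮ).comp K.orthogonalDecomposition.measurePreserving
  have hsnd : LocallyIntegrable (fun p : K × Kᗮ => g p.2) (volume.map e) := by
    rw [he.map_eq]
    exact locallyIntegrable_comp_snd hg
  have hcomp : (fun p : K × Kᗮ => g p.2) ∘ e = g ∘ Kᗮ.orthogonalProjectionOnto :=
    funext fun w => congrArg g (K.snd_orthogonalDecomposition_apply w)
  exact hcomp ▸ (locallyIntegrable_map_homeomorph e).1 hsnd

theorem locallyIntegrable_norm_pow_div_infDist_pow (K : Submodule ℝ E) (m : ℕ) {k : ℕ}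
    (hk : k < finrank ℝ Kᗮ) : LocallyIntegrable fun w : E => ‖w‖ ^ m / infDist w K ^ k := by
  have h := locallyIntegrable_comp_orthogonalProjectionOnto K
    (locallyIntegrable_inv_norm_pow (μ := volume) hk)
  simp only [infDist_eq_norm_orthogonalProjectionOnto, div_eq_mul_inv]
  exact h.continuous_mul (continuous_norm.pow m)

end LocallyIntegrable

theorem norm_pow_div_infDist_pow_smul_le {E : Type*} [NormedAddCommGroup E] [InnerProductSpace ℝ E]
    (K : Submodule ℝ E) [K.HasOrthogonalProjection] {m k : ℕ} (hmk : m ≤ k) {t : ℝ} (ht : 1 ≤ t)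
    (w : E) : ‖t • w‖ ^ m / infDist (t • w) K ^ k ≤ ‖w‖ ^ m / infDist w K ^ k := by
  have ht₀ : 0 < t := one_pos.trans_le ht
  have hratio : t ^ m / t ^ k ≤ 1 := (div_le_one₀ (by positivity)).2 (pow_le_pow_right₀ ht hmk)
  simp only [infDist_eq_norm_orthogonalProjectionOnto, map_smul, norm_smul,
    Real.norm_of_nonneg ht₀.le, mul_pow, mul_div_mul_comm]
  exact mul_le_of_le_one_left (by positivity) hratio

theorem harmonic_bddAbove_of_le_off_submodule {E : Type*} [NormedAddCommGroup E]
    [InnerProductSpace ℝ E] [FiniteDimensional ℝ E] (K : Submodule ℝ E) {m k : ℕ} (hmk : m ≤ k)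
    (hk : k < finrank ℝ Kᗮ) {f : E → ℝ} (hf : HarmonicOnNhd f univ) (C : ℝ)
    (hbound : ∀ w ∉ K, f w ≤ C * (‖w‖ ^ m / infDist w K ^ k)) : BddAbove (range f) := by
  borelize E
  have hK : K ≠ ⊤ := by
    rintro rfl
    rw [Submodule.top_orthogonal_eq_bot, finrank_bot] at hk
    exact k.not_lt_zero hk
  have hoff : ∀ᵐ w : E, w ∉ K :=
    measure_eq_zero_iff_ae_notMem.1 (Measure.addHaar_submodule volume K hK)
  have hloc : LocallyIntegrable fun w : E => |C| * (‖w‖ ^ m / infDist w K ^ k) :=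
    (locallyIntegrable_norm_pow_div_infDist_pow K m hk).smul |C|
  have hnonneg (w : E) : 0 ≤ ‖w‖ ^ m / infDist w K ^ k :=
    div_nonneg (by positivity) (pow_nonneg infDist_nonneg k)
  refine harmonic_bddAbove_of_ae_le hf hloc
    (fun w => mul_nonneg (abs_nonneg C) (hnonneg w)) (fun t ht w => ?_) ?_
  · exact mul_le_mul_of_nonneg_left (norm_pow_div_infDist_pow_smul_le K hmk ht w) (abs_nonneg C)
  · filter_upwards [hoff] with w hw
    exact (hbound w hw).trans (mul_le_mul_of_nonneg_right (le_abs_self C) (hnonneg w))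

theorem harmonic_bounded_by_axis_is_constant_general {E : Type*} [NormedAddCommGroup E]
    [InnerProductSpace ℝ E] [FiniteDimensional ℝ E] (K : Submodule ℝ E) {m k : ℕ} (hmk : m ≤ k)
    (hk : k < finrank ℝ Kᗮ) {f : E → ℝ} (hf : HarmonicOnNhd f univ) (C : ℝ)
    (hbound : ∀ w ∉ K, f w ≤ C * (‖w‖ ^ m / infDist w K ^ k)) : ∃ c, ∀ w, f w = c :=
  harmonic_eq_const_of_bddAbove hf (harmonic_bddAbove_of_le_off_submodule K hmk hk hf C hbound)

theorem harmonicOnNhd_of_sum_fderiv_fderiv_eq_zero {ι E : Type*} [Fintype ι] [NormedAddCommGroup E]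
    [InnerProductSpace ℝ E] [FiniteDimensional ℝ E] (b : OrthonormalBasis ι ℝ E) {f : E → ℝ}
    (hf : ContDiff ℝ 2 f)
    (hsum : ∀ w, ∑ i, fderiv ℝ (fun v => fderiv ℝ f v (b i)) w (b i) = 0) :
    HarmonicOnNhd f univ := by
  refine fun w _ => ⟨hf.contDiffAt, Eventually.of_forall fun x => ?_⟩
  simpa only [laplacian_eq_iteratedFDeriv_orthonormalBasis f b,
    fderiv_fderiv_apply_eq_iteratedFDeriv hf, Pi.zero_apply] using hsum x

theorem infDist_span_singleton_sq {E : Type*} [NormedAddCommGroup E] [InnerProductSpace ℝ E]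
    {v : E} (hv : ‖v‖ = 1) (w : E) : infDist w (ℝ ∙ v) ^ 2 = ‖w‖ ^ 2 - inner ℝ v w ^ 2 := by
  have hproj : ‖(ℝ ∙ v).orthogonalProjectionOnto w‖ = |inner ℝ v w| := by
    rw [Submodule.coe_norm, ← Submodule.starProjection_apply,
      Submodule.starProjection_unit_singleton ℝ hv, norm_smul, hv, mul_one, Real.norm_eq_abs]
  rw [infDist_eq_norm_orthogonalProjectionOnto,
    Submodule.norm_sq_eq_add_norm_sq_projection w (ℝ ∙ v), hproj, sq_abs, add_sub_cancel_left]

theorem infDist_span_single_sq (w : EuclideanSpace ℝ (Fin 5)) :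
    infDist w (ℝ ∙ EuclideanSpace.single (0 : Fin 5) (1 : ℝ)) ^ 2 =
      w 1 ^ 2 + w 2 ^ 2 + w 3 ^ 2 + w 4 ^ 2 := by
  rw [infDist_span_singleton_sq (by simp), EuclideanSpace.real_norm_sq_eq, Fin.sum_univ_five,
    EuclideanSpace.inner_single_left, map_one, one_mul]
  ring

/-- Liouville-type theorem used in the uniqueness proof: a `C²` harmonic function `f` on
`ℝ⁵` satisfying `f(w) ≤ C·‖w‖/r(w)²` off the `w₁`-axis, where
`r(w)² = w₂² + w₃² + w₄² + w₅²` is the squared distance to the axis, is constant. -/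
theorem harmonic_bounded_by_axis_is_constant
    (f : EuclideanSpace ℝ (Fin 5) → ℝ) (hf : ContDiff ℝ 2 f)
    (hharm : ∀ w : EuclideanSpace ℝ (Fin 5), ∑ i : Fin 5, pd2₅ f i w = 0)
    (C : ℝ) (hC : 0 < C)
    (hbound : ∀ w : EuclideanSpace ℝ (Fin 5),
      (w 1) ^ 2 + (w 2) ^ 2 + (w 3) ^ 2 + (w 4) ^ 2 ≠ 0 →
      f w ≤ C * ‖w‖ / ((w 1) ^ 2 + (w 2) ^ 2 + (w 3) ^ 2 + (w 4) ^ 2)) :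
    ∃ c : ℝ, ∀ w, f w = c := by
  refine harmonic_bounded_by_axis_is_constant_general
    (ℝ ∙ EuclideanSpace.single (0 : Fin 5) (1 : ℝ)) (m := 1) (k := 2) one_le_two
    (by rw [Submodule.finrank_orthogonal_span_singleton (n := 4) (by simp)]; norm_num)
    (harmonicOnNhd_of_sum_fderiv_fderiv_eq_zero (EuclideanSpace.basisFun (Fin 5) ℝ) hf
      (by simpa [pd2₅] using hharm)) C fun w hw => ?_
  have hdist := ((Submodule.closed_of_finiteDimensional _).notMem_iff_infDist_pos
    (Submodule.nonempty _)).1 hw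
  rw [pow_one, ← mul_div_assoc, infDist_span_single_sq]
  exact hbound w (by rw [← infDist_span_single_sq]; positivity)
end

section
/- Let U ⊆ ℂ be open, let a ∈ U, and let f be holomorphic on U \ {a}. Suppose f has a pole at a in the sense that ‖f(z)‖ → ∞ as z → a with z ≠ a. Then the image of f is not contained in the open upper half-plane: there exists z ∈ U \ {a} with Im(f(z)) ≤ 0. -/
open Filter

/-! Near a pole `a` the function `1 / f` extends analytically by `0`, so the open mapping theorem
shows that `f` takes every value of large modulus near `a`; some of these values are real. -/

open Bornology Function Topology

theorem nhdsNE_le_map_nhdsNE {X Y : Type*} [TopologicalSpace X] [TopologicalSpace Y]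
    {g : X → Y} {a : X} (hg : 𝓝 (g a) ≤ map g (𝓝 a)) :
    𝓝[≠] (g a) ≤ map g (𝓝[≠] a) := by
  rw [← pure_sup_nhdsNE a, map_sup, map_pure] at hg
  calc 𝓝[≠] (g a) ≤ (pure (g a) ⊔ map g (𝓝[≠] a)) ⊓ 𝓟 {g a}ᶜ := inf_le_inf_right _ hg
    _ = map g (𝓝[≠] a) ⊓ 𝓟 {g a}ᶜ := by simp [inf_sup_right, ← principal_singleton]
    _ ≤ map g (𝓝[≠] a) := inf_le_left

theorem analyticAt_update_of_tendsto {F : Type*} [NormedAddCommGroup F] [NormedSpace ℂ F]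
    [CompleteSpace F] {h : ℂ → F} {a : ℂ} {b : F}
    (hd : ∀ᶠ z in 𝓝[≠] a, DifferentiableAt ℂ h z) (hlim : Tendsto h (𝓝[≠] a) (𝓝 b)) :
    AnalyticAt ℂ (update h a b) a := by
  refine Complex.analyticAt_of_differentiable_on_punctured_nhds_of_continuousAt ?_
    (continuousAt_update_same.2 hlim)
  filter_upwards [hd, self_mem_nhdsWithin] with z hz hza
  refine hz.congr_of_eventuallyEq ?_
  filter_upwards [isOpen_compl_singleton.mem_nhds hza] with w hw using update_of_ne hw b h

theorem map_nhdsNE_eq_of_tendsto_nhdsNE {h : ℂ → ℂ} {a b : ℂ}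
    (hd : ∀ᶠ z in 𝓝[≠] a, DifferentiableAt ℂ h z) (hlim : Tendsto h (𝓝[≠] a) (𝓝[≠] b)) :
    map h (𝓝[≠] a) = 𝓝[≠] b := by
  have hanalytic : AnalyticAt ℂ (update h a b) a :=
    analyticAt_update_of_tendsto hd (hlim.mono_right nhdsWithin_le_nhds)
  have hupdate : update h a b =ᶠ[𝓝[≠] a] h := update_eventuallyEq_nhdsNE h a a b
  refine le_antisymm hlim ?_
  rcases hanalytic.eventually_constant_or_nhds_le_map_nhds with hconst | hopen
  · have hne : ∀ᶠ z in 𝓝[≠] a, h z ≠ b := hlim self_mem_nhdsWithin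
    obtain ⟨z, hzconst, hzupdate, hzne⟩ :=
      ((hconst.filter_mono nhdsWithin_le_nhds).and (hupdate.and hne)).exists
    exact absurd (by rw [← hzupdate, hzconst, update_self]) hzne
  · simpa only [update_self, map_congr hupdate] using nhdsNE_le_map_nhdsNE hopen

open scoped Pointwise in
theorem map_nhdsNE_eq_cobounded_of_tendsto_cobounded {f : ℂ → ℂ} {a : ℂ}
    (hd : ∀ᶠ z in 𝓝[≠] a, DifferentiableAt ℂ f z)
    (hpole : Tendsto f (𝓝[≠] a) (cobounded ℂ)) :
    map f (𝓝[≠] a) = cobounded ℂ := by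
  have hd_inv : ∀ᶠ z in 𝓝[≠] a, DifferentiableAt ℂ f⁻¹ z := by
    filter_upwards [hd, hpole.eventually_ne_cobounded 0] with z hz hz0
    exact hz.inv hz0
  calc map f (𝓝[≠] a) = map (f⁻¹)⁻¹ (𝓝[≠] a) := by rw [inv_inv]
    _ = (map f⁻¹ (𝓝[≠] a))⁻¹ := rfl
    _ = (𝓝[≠] 0)⁻¹ := by
        rw [map_nhdsNE_eq_of_tendsto_nhdsNE hd_inv (tendsto_inv₀_cobounded'.comp hpole)]
    _ = cobounded ℂ := inv_nhdsNE_zero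

/-- A holomorphic function with a pole cannot take values only in the open upper
half-plane: if `f` is holomorphic on `U \ {a}` (with `U` open, `a ∈ U`) and
`‖f(z)‖ → ∞` as `z → a`, `z ≠ a`, then there is some `z ∈ U \ {a}` with `Im(f z) ≤ 0`. -/
theorem pole_image_not_in_upper_half_plane
    (U : Set ℂ) (hU : IsOpen U) (a : ℂ) (ha : a ∈ U)
    (f : ℂ → ℂ) (hf : DifferentiableOn ℂ f (U \ {a}))
    (hpole : Tendsto (fun z => ‖f z‖) (nhdsWithin a {a}ᶜ) atTop) :
    ∃ z ∈ U \ {a}, (f z).im ≤ 0 := by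
  have hmem : ∀ᶠ z in 𝓝[≠] a, z ∈ U \ {a} := sdiff_mem_nhdsWithin_compl (hU.mem_nhds ha) {a}
  have hd : ∀ᶠ z in 𝓝[≠] a, DifferentiableAt ℂ f z :=
    hmem.mono fun z hz => hf.differentiableAt ((hU.sdiff isClosed_singleton).mem_nhds hz)
  have hmap : map f (𝓝[≠] a) = cobounded ℂ :=
    map_nhdsNE_eq_cobounded_of_tendsto_cobounded hd (tendsto_norm_atTop_iff_cobounded.1 hpole)
  have hreal : ∃ᶠ w in cobounded ℂ, w.im ≤ 0 :=
    (RCLike.tendsto_ofReal_atTop_cobounded ℂ).frequently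
      (Frequently.of_forall fun x => (Complex.ofReal_im x).le)
  rw [← hmap, frequently_map] at hreal
  obtain ⟨z, him, hz⟩ := (hreal.and_eventually hmem).exists
  exact ⟨z, hz, him⟩
end

section
/- Let f be holomorphic and injective on the punctured unit disc D \ {0} = {z ∈ ℂ : 0 < ‖z‖ < 1}. Then 0 is not an essential singularity of f: either f is bounded on some punctured neighbourhood of 0 (so the singularity is removable), or ‖f(z)‖ → ∞ as z → 0 (so f has a pole at 0). -/
/-!
The image of a small disc around a point `p ≠ c` is a neighbourhood of `f p` by the open mapping
theorem, and injectivity keeps the values of `f` near `c` out of it. Hence `f p` is not a cluster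
value of `f` at `c`, so by Casorati–Weierstrass (in place of Picard's theorem) `f` is meromorphic
at `c`.
-/

open Filter Topology

theorem meromorphicAt_of_isBoundedUnder_norm {E : Type*} [NormedAddCommGroup E] [NormedSpace ℂ E]
    [CompleteSpace E] {f : ℂ → E} {c : ℂ} (hd : ∀ᶠ z in 𝓝[≠] c, DifferentiableAt ℂ f z)
    (hb : IsBoundedUnder (· ≤ ·) (𝓝[≠] c) fun z ↦ ‖f z‖) : MeromorphicAt f c := by
  have hsub : Tendsto (fun z ↦ z - c) (𝓝[≠] c) (𝓝 0) :=
    tendsto_sub_nhds_zero_iff.2 (tendsto_id.mono_left nhdsWithin_le_nhds)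
  have hcont : ContinuousAt (fun z ↦ (z - c) ^ 1 • f z) c := by
    rw [continuousAt_iff_punctured_nhds]
    simpa using hsub.zero_smul_isBoundedUnder_le hb
  refine ⟨1, Complex.analyticAt_of_differentiable_on_punctured_nhds_of_continuousAt ?_ hcont⟩
  filter_upwards [hd] with z hz
  fun_prop

theorem mapClusterPt_of_not_meromorphicAt {f : ℂ → ℂ} {c : ℂ}
    (hd : ∀ᶠ z in 𝓝[≠] c, DifferentiableAt ℂ f z) (hf : ¬ MeromorphicAt f c) (w : ℂ) :
    MapClusterPt w (𝓝[≠] c) f := by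
  contrapose! hf
  obtain ⟨δ, hδ, hfar⟩ : ∃ δ > 0, ∀ᶠ z in 𝓝[≠] c, δ ≤ ‖f z - w‖ := by
    simpa [Metric.nhds_basis_ball.mapClusterPt_iff_frequently, dist_eq_norm] using hf
  have hinv : MeromorphicAt (fun z ↦ f z - w)⁻¹ c := by
    refine meromorphicAt_of_isBoundedUnder_norm ?_ (isBoundedUnder_of_eventually_le (a := δ⁻¹) ?_)
    · filter_upwards [hd, hfar] with z hz hδz
      exact (hz.sub_const w).inv (norm_pos_iff.1 (hδ.trans_le hδz))
    · filter_upwards [hfar] with z hδz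
      simpa using inv_anti₀ hδ hδz
  simpa [Pi.add_def] using hinv.inv.add (MeromorphicAt.const w c)

theorem isBoundedUnder_norm_or_tendsto_norm_atTop_of_meromorphicAt {𝕜 E : Type*}
    [NontriviallyNormedField 𝕜] [NormedAddCommGroup E] [NormedSpace 𝕜 E] {f : 𝕜 → E} {x : 𝕜}
    (hf : MeromorphicAt f x) :
    IsBoundedUnder (· ≤ ·) (𝓝[≠] x) (fun z ↦ ‖f z‖) ∨
      Tendsto (fun z ↦ ‖f z‖) (𝓝[≠] x) atTop := by
  rcases le_or_gt 0 (meromorphicOrderAt f x) with hord | hord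
  · obtain ⟨y, hy⟩ := tendsto_nhds_of_meromorphicOrderAt_nonneg hf hord
    exact .inl hy.norm.isBoundedUnder_le
  · exact .inr <|
      tendsto_norm_cobounded_atTop.comp (tendsto_cobounded_of_meromorphicOrderAt_neg hord)

theorem exists_forall_ball_sdiff_singleton_le_of_isBoundedUnder {X β : Type*}
    [PseudoMetricSpace X] [LE β] {u : X → β} {c : X} {R : ℝ} (hR : 0 < R)
    (hu : IsBoundedUnder (· ≤ ·) (𝓝[≠] c) u) :
    ∃ ε : ℝ, 0 < ε ∧ ε ≤ R ∧ ∃ M, ∀ z ∈ Metric.ball c ε \ {c}, u z ≤ M := by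
  obtain ⟨M, hM⟩ := hu
  obtain ⟨ε, hε, hball⟩ := Metric.mem_nhdsWithin_iff.1 (eventually_map.1 hM)
  exact ⟨min ε R, lt_min hε hR, min_le_right _ _, M, fun z hz ↦
    hball ⟨Metric.ball_subset_ball (min_le_left _ _) hz.1, hz.2⟩⟩

theorem not_mapClusterPt_of_injOn {X Y : Type*} [TopologicalSpace X] [TopologicalSpace Y]
    {f : X → Y} {s : Set X} {p : X} {l : Filter X} (hinj : Set.InjOn f s) (hsp : s ∈ 𝓝 p)
    (hsl : s ∈ l) (hpl : Disjoint (𝓝 p) l) (hopen : 𝓝 (f p) ≤ map f (𝓝 p)) :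
    ¬ MapClusterPt (f p) l f := by
  have hdisj : Disjoint (map f (𝓝 p)) (map f l) := by
    rw [disjoint_iff, ← map_inf' hsp hsl hinj, hpl.eq_bot, map_bot]
  rw [mapClusterPt_def, ClusterPt, not_neBot]
  exact (hdisj.mono_left hopen).eq_bot

theorem nhds_le_map_nhds_of_injOn {f : ℂ → ℂ} {s : Set ℂ} {p : ℂ} (hf : AnalyticAt ℂ f p)
    (hs : s ∈ 𝓝 p) (hinj : Set.InjOn f s) : 𝓝 (f p) ≤ map f (𝓝 p) := by
  refine hf.eventually_constant_or_nhds_le_map_nhds.resolve_left fun hconst ↦ ?_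
  have heq : ∀ᶠ z in 𝓝 p, z = p := by
    filter_upwards [hconst, hs] with z hz hzs
    exact hinj hzs (mem_of_mem_nhds hs) hz
  obtain ⟨z, hz, hne⟩ :=
    ((heq.filter_mono nhdsWithin_le_nhds).and (self_mem_nhdsWithin (s := {p}ᶜ))).exists
  exact hne hz

theorem injective_holomorphic_no_essential_singularity_general {f : ℂ → ℂ} {c : ℂ} {s : Set ℂ}
    (hs : s ∈ 𝓝[≠] c) (hf : DifferentiableOn ℂ f s) (hinj : Set.InjOn f s) :
    MeromorphicAt f c := by
  have hnhds : ∀ᶠ z in 𝓝[≠] c, s ∈ 𝓝 z := eventually_nhdsNE_eventually_nhds_iff.2 hs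
  obtain ⟨p, hsp, hpc⟩ := (hnhds.and self_mem_nhdsWithin).exists
  have hdisj : Disjoint (𝓝 p) (𝓝[≠] c) := (disjoint_nhds_nhds.2 hpc).mono_right nhdsWithin_le_nhds
  have hopen : 𝓝 (f p) ≤ map f (𝓝 p) := nhds_le_map_nhds_of_injOn (hf.analyticAt hsp) hsp hinj
  by_contra hmero
  exact not_mapClusterPt_of_injOn hinj hsp hs hdisj hopen
    (mapClusterPt_of_not_meromorphicAt (hnhds.mono fun _ ↦ hf.differentiableAt) hmero (f p))

/-- An injective holomorphic function on the punctured unit disc has no essential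
singularity at `0`: either it is bounded on some punctured neighbourhood of `0`
(removable singularity), or `‖f(z)‖ → ∞` as `z → 0` (pole). -/
theorem injective_holomorphic_no_essential_singularity
    (f : ℂ → ℂ)
    (hf : DifferentiableOn ℂ f (Metric.ball (0 : ℂ) 1 \ {0}))
    (hinj : Set.InjOn f (Metric.ball (0 : ℂ) 1 \ {0})) :
    (∃ ε : ℝ, 0 < ε ∧ ε ≤ 1 ∧ ∃ M : ℝ,
        ∀ z ∈ Metric.ball (0 : ℂ) ε \ {0}, ‖f z‖ ≤ M) ∨
    Tendsto (fun z => ‖f z‖) (nhdsWithin 0 {0}ᶜ) atTop := by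
  have hdisc : Metric.ball (0 : ℂ) 1 \ {0} ∈ 𝓝[≠] 0 :=
    sdiff_mem_nhdsWithin_compl (Metric.ball_mem_nhds 0 one_pos) {0}
  have hmero := injective_holomorphic_no_essential_singularity_general hdisc hf hinj
  exact (isBoundedUnder_norm_or_tendsto_norm_atTop_of_meromorphicAt hmero).imp_left
    (exists_forall_ball_sdiff_singleton_le_of_isBoundedUnder one_pos)
end

section
/- Let f be holomorphic and injective on the punctured unit disc D \ {0} = {z ∈ ℂ : 0 < ‖z‖ < 1}, and suppose ‖f(z)‖ → ∞ as z → 0. Then the pole of f at 0 is simple: the function z ↦ z·f(z) extends holomorphically across 0 with a nonzero value at 0. -/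
open Filter

/-! The reciprocal of `f` extends analytically across the pole by the value `0`, and is injective
near it. A nonconstant analytic function whose derivative vanishes at a point is, up to a constant,
locally the `n`-th power (`n ≥ 2`) of a local biholomorphism `φ`, so it takes equal values at the
preimages under `φ` of `w` and `ζ w`, where `ζ` is a primitive `n`-th root of unity. Hence the
reciprocal has nonzero derivative at the pole, and `f` a simple pole.
-/

open Bornology Set Topology

lemma not_injOn_pow_of_mem_nhdsNE_zero {𝕜 : Type*} [Field 𝕜] [TopologicalSpace 𝕜]
    [ContinuousMul 𝕜] [(𝓝[≠] (0 : 𝕜)).NeBot] {ζ : 𝕜} {n : ℕ} (hζ : IsPrimitiveRoot ζ n)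
    (hn : 1 < n) {s : Set 𝕜} (hs : s ∈ 𝓝[≠] 0) : ¬InjOn (· ^ n) s := by
  intro hinj
  have hζ0 : ζ ≠ 0 := hζ.ne_zero (by lia)
  have hrot : Tendsto (ζ * ·) (𝓝[≠] 0) (𝓝[≠] 0) := by
    refine tendsto_nhdsWithin_of_tendsto_nhds_of_eventually_within _ ?_ ?_
    · exact ((continuous_const_mul ζ).tendsto' 0 0 (mul_zero ζ)).mono_left nhdsWithin_le_nhds
    · filter_upwards [self_mem_nhdsWithin] with w hw using mul_ne_zero hζ0 hw
  obtain ⟨w, hζw, hw, hw0⟩ :=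
    ((hrot.eventually_mem hs).and (inter_mem hs self_mem_nhdsWithin)).exists
  have hpow : (ζ * w) ^ n = w ^ n := by rw [mul_pow, hζ.pow_eq_one, one_mul]
  exact hζ.ne_one hn ((mul_eq_right₀ hw0).1 (hinj hζw hw hpow))

lemma exists_analyticAt_pow_eq {E : Type*} [NormedAddCommGroup E] [NormedSpace ℂ E] {k : E → ℂ}
    {c : E} (hk : AnalyticAt ℂ k c) (hkc : k c ≠ 0) {n : ℕ} (hn : n ≠ 0) :
    ∃ r : E → ℂ, AnalyticAt ℂ r c ∧ ∀ z, r z ^ n = k z := by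
  -- Dividing by `k c` moves the value at `c` to `1`, away from the branch cut of `cpow`.
  refine ⟨fun z ↦ (k z / k c) ^ (n⁻¹ : ℂ) * k c ^ (n⁻¹ : ℂ), ?_, fun z ↦ ?_⟩
  · refine AnalyticAt.mul (AnalyticAt.cpow (hk.div analyticAt_const hkc) analyticAt_const ?_)
      analyticAt_const
    simp [hkc]
  · rw [mul_pow, Complex.cpow_nat_inv_pow _ hn, Complex.cpow_nat_inv_pow _ hn,
      div_mul_cancel₀ _ hkc]

lemma exists_eventuallyEq_pow_of_analyticOrderAt_eq {h : ℂ → ℂ} {c : ℂ} {n : ℕ}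
    (hh : AnalyticAt ℂ h c) (hord : analyticOrderAt h c = n) (hn : n ≠ 0) :
    ∃ φ : ℂ → ℂ, AnalyticAt ℂ φ c ∧ φ c = 0 ∧ deriv φ c ≠ 0 ∧ h =ᶠ[𝓝 c] fun z ↦ φ z ^ n := by
  obtain ⟨k, hk, hkc, hhk⟩ := hh.analyticOrderAt_eq_natCast.1 hord
  obtain ⟨r, hr, hrk⟩ := exists_analyticAt_pow_eq hk hkc hn
  have hrc : r c ≠ 0 := (pow_ne_zero_iff hn).1 (by rwa [hrk])
  have hderiv : HasDerivAt (fun z ↦ (z - c) * r z) (r c) c := by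
    simpa using ((hasDerivAt_id c).sub_const c).fun_mul hr.differentiableAt.hasDerivAt
  refine ⟨fun z ↦ (z - c) * r z, by fun_prop, by simp, hderiv.deriv ▸ hrc, ?_⟩
  filter_upwards [hhk] with z hz
  rw [hz, mul_pow, hrk, smul_eq_mul]

lemma image_mem_nhdsNE_of_nhds_le_map {X Y : Type*} [TopologicalSpace X] [TopologicalSpace Y]
    {φ : X → Y} {c : X} (hφ : 𝓝 (φ c) ≤ map φ (𝓝 c)) {t : Set X} (ht : t ∈ 𝓝[≠] c) :
    φ '' t ∈ 𝓝[≠] (φ c) := by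
  rw [← insert_mem_nhds_iff, ← image_insert_eq]
  exact hφ (image_mem_map (insert_mem_nhds_iff.2 ht))

lemma not_injOn_of_eqOn_const_of_mem_nhdsNE {X Y : Type*} [TopologicalSpace X] [T1Space X]
    {h : X → Y} {c : X} [(𝓝[≠] c).NeBot] {y : Y} {t : Set X} (ht : t ∈ 𝓝[≠] c)
    (hconst : EqOn h (fun _ ↦ y) t) : ¬InjOn h t := by
  intro hinj
  have ht_sub : t.Subsingleton := fun x hx x' hx' ↦
    hinj hx hx' ((hconst hx).trans (hconst hx').symm)
  exact infinite_of_mem_nhds c (insert_mem_nhds_iff.2 ht) (ht_sub.finite.insert c)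

lemma analyticOrderAt_sub_eq_one_of_injOn_nhdsNE {h : ℂ → ℂ} {c : ℂ} {t : Set ℂ}
    (hh : AnalyticAt ℂ h c) (ht : t ∈ 𝓝[≠] c) (hinj : InjOn h t) :
    analyticOrderAt (h · - h c) c = 1 := by
  have hsub : AnalyticAt ℂ (h · - h c) c := by fun_prop
  have hinj_sub : InjOn (h · - h c) t := (sub_left_injective (b := h c)).comp_injOn hinj
  cases hord : analyticOrderAt (h · - h c) c with
  | top =>
    exact absurd (hinj_sub.mono inter_subset_left) <|
      not_injOn_of_eqOn_const_of_mem_nhdsNE (inter_mem ht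
        (mem_nhdsWithin_of_mem_nhds (analyticOrderAt_eq_top.1 hord))) fun z hz ↦ hz.2
  | coe n =>
    have hn0 : n ≠ 0 := by
      rintro rfl
      exact hsub.analyticOrderAt_eq_zero.1 hord (sub_self _)
    obtain ⟨φ, hφ, hφc, hφ', hpow⟩ := exists_eventuallyEq_pow_of_analyticOrderAt_eq hsub hord hn0
    set s : Set ℂ := t ∩ {z | h z - h c = φ z ^ n}
    have hs : s ∈ 𝓝[≠] c := inter_mem ht (mem_nhdsWithin_of_mem_nhds hpow)
    have himage : φ '' s ∈ 𝓝[≠] 0 :=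
      hφc ▸ image_mem_nhdsNE_of_nhds_le_map (hφ.hasStrictDerivAt.map_nhds_eq hφ').ge hs
    have hinj_pow : InjOn (· ^ n) (φ '' s) :=
      ((hinj_sub.mono inter_subset_left).congr fun z hz ↦ hz.2).image_of_comp
    have hn1 : ¬1 < n := fun hn ↦
      not_injOn_pow_of_mem_nhdsNE_zero (Complex.isPrimitiveRoot_exp n hn0) hn himage hinj_pow
    exact_mod_cast (by lia : n = 1)

lemma deriv_ne_zero_of_injOn_nhdsNE {h : ℂ → ℂ} {c : ℂ} {t : Set ℂ}
    (hh : AnalyticAt ℂ h c) (ht : t ∈ 𝓝[≠] c) (hinj : InjOn h t) : deriv h c ≠ 0 := by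
  have hord := hh.analyticOrderAt_deriv_add_one
  rw [analyticOrderAt_sub_eq_one_of_injOn_nhdsNE hh ht hinj] at hord
  have hord_deriv : analyticOrderAt (deriv h) c = 0 := by simpa using hord
  exact hh.deriv.analyticOrderAt_eq_zero.1 hord_deriv

lemma analyticAt_update_inv_of_tendsto_cobounded {f : ℂ → ℂ} {c : ℂ}
    (hf : ∀ᶠ z in 𝓝[≠] c, DifferentiableAt ℂ f z) (hpole : Tendsto f (𝓝[≠] c) (cobounded ℂ)) :
    AnalyticAt ℂ (Function.update f⁻¹ c 0) c := by
  refine Complex.analyticAt_of_differentiable_on_punctured_nhds_of_continuousAt ?_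
    (continuousAt_update_same.2 (tendsto_inv₀_cobounded.comp hpole))
  filter_upwards [hf, hpole.eventually_ne_cobounded 0,
    eventually_nhdsNE_eventually_nhds_iff.2 (Function.update_eventuallyEq_nhdsNE f⁻¹ c c 0)]
    with z hfz hz0 heq
  exact (hfz.inv hz0).congr_of_eventuallyEq heq

theorem injective_holomorphic_pole_is_simple_general {f : ℂ → ℂ} {c : ℂ} {U t : Set ℂ}
    (hU : U ∈ 𝓝 c) (hf : DifferentiableOn ℂ f (U \ {c})) (ht : t ∈ 𝓝[≠] c) (hinj : InjOn f t)
    (hpole : Tendsto (fun z ↦ ‖f z‖) (𝓝[≠] c) atTop) :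
    ∃ g : ℂ → ℂ, DifferentiableOn ℂ g U ∧ g c ≠ 0 ∧ ∀ z ∈ U \ {c}, g z = (z - c) * f z := by
  set h : ℂ → ℂ := Function.update f⁻¹ c 0
  have hhc : h c = 0 := Function.update_self ..
  have hhf : EqOn h f⁻¹ {c}ᶜ := fun z hz ↦ Function.update_of_ne hz ..
  have hh : AnalyticAt ℂ h c := by
    refine analyticAt_update_inv_of_tendsto_cobounded ?_ (tendsto_norm_atTop_iff_cobounded.1 hpole)
    exact (eventually_nhdsNE_eventually_nhds_iff.2 (sdiff_mem_nhdsWithin_compl hU {c})).mono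
      fun z hz ↦ hf.differentiableAt hz
  have hderiv : deriv h c ≠ 0 := by
    refine deriv_ne_zero_of_injOn_nhdsNE hh (inter_mem ht self_mem_nhdsWithin) ?_
    exact (inv_injective.comp_injOn (hinj.mono inter_subset_left)).congr
      (hhf.symm.mono inter_subset_right)
  have hg : ∀ z ∈ U \ {c}, (dslope h c z)⁻¹ = (z - c) * f z := fun z hz ↦ by
    rw [dslope_of_ne _ hz.2, slope_def_field, hhc, sub_zero, hhf hz.2, Pi.inv_apply, inv_div,
      div_inv_eq_mul]
  refine ⟨fun z ↦ (dslope h c z)⁻¹, ?_, by simpa using hderiv, hg⟩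
  rw [← Complex.differentiableOn_compl_singleton_and_continuousAt_iff hU]
  constructor
  · exact DifferentiableOn.congr (by fun_prop) hg
  · exact (continuousAt_dslope_same.2 hh.differentiableAt).inv₀ (by simpa using hderiv)

/-- An injective holomorphic function on the punctured unit disc with a pole at `0` has a
simple pole there: `z ↦ z·f(z)` extends holomorphically across `0` with nonzero value at
`0`. -/
theorem injective_holomorphic_pole_is_simple
    (f : ℂ → ℂ)
    (hf : DifferentiableOn ℂ f (Metric.ball (0 : ℂ) 1 \ {0}))
    (hinj : Set.InjOn f (Metric.ball (0 : ℂ) 1 \ {0}))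
    (hpole : Tendsto (fun z => ‖f z‖) (nhdsWithin 0 {0}ᶜ) atTop) :
    ∃ g : ℂ → ℂ, DifferentiableOn ℂ g (Metric.ball (0 : ℂ) 1) ∧ g 0 ≠ 0 ∧
      ∀ z ∈ Metric.ball (0 : ℂ) 1 \ {0}, g z = z * f z := by
  have hU : Metric.ball (0 : ℂ) 1 ∈ 𝓝 0 := Metric.ball_mem_nhds 0 one_pos
  simpa only [sub_zero] using injective_holomorphic_pole_is_simple_general hU hf
    (sdiff_mem_nhdsWithin_compl hU {0}) hinj hpole
end
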